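/- Let n ≥ 1 be an integer, 0 < s < 1, p = 1, and let u : ℝⁿ → ℝ be a continuous function that is 2π-periodic in the variable x₁ and has finite periodic Gagliardo seminorm [u]^{per}_{W^{s,1}}. Then [u^{*per}]^{per}_{W^{s,1}} = [u]^{per}_{W^{s,1}} holds if and only if u = |u| or u = −|u|, and for almost every τ ∈ ℝ there exists a_τ ∈ ℝ such that {|u| > τ} = {|u| > τ}^{*per} + a_τ e₁ up to a set of n-dimensional Lebesgue measure zero, where e₁ = (1,0,…,0) ∈ ℝⁿ. -/

import Mathlib

open MeasureTheory Real
open scoped ENNReal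

/-- For a measurable set `A ⊂ ℝ` of finite measure, `A^* := (−|A|/2, |A|/2)`. -/
noncomputable def symmSet (A : Set ℝ) : Set ℝ :=
  Set.Ioo (-((volume A).toReal / 2)) ((volume A).toReal / 2)

/-- Symmetric decreasing rearrangement of a (nonnegative) function on `(−π,π)`:
`u^*(x) := ∫₀^∞ χ_{{u>t}^*}(x) dt`. -/
noncomputable def symmRearr (u : ℝ → ℝ) : ℝ → ℝ := fun x =>
  ∫ t in Set.Ioi (0 : ℝ),
    (symmSet {y | y ∈ Set.Ioo (-π) π ∧ t < u y}).indicator (fun _ => (1 : ℝ)) x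

/-- The `2π`-periodic extension of (the restriction to `[−π,π)` of) a function. -/
noncomputable def periodize (f : ℝ → ℝ) : ℝ → ℝ := fun x =>
  f (x - 2 * π * (⌊(x + π) / (2 * π)⌋ : ℝ))

/-- The periodic rearrangement `f^{*per}`: the `2π`-periodic extension of `(f·χ_{(−π,π)})^*`. -/
noncomputable def perRearr (f : ℝ → ℝ) : ℝ → ℝ := periodize (symmRearr f)
/-- `([u]^{per}_{W^{s,p}})^p`, the `p`-th power of the periodic Gagliardo seminorm on
`ℝⁿ = ℝ × ℝ^{n−1}` (so `n = m + 1`), for a function which is `2π`-periodic in the first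
variable. -/
noncomputable def gagP (m : ℕ) (s p : ℝ) (u : ℝ × EuclideanSpace ℝ (Fin m) → ℝ) : ℝ≥0∞ :=
  ∫⁻ x in {x : ℝ × EuclideanSpace ℝ (Fin m) | x.1 ∈ Set.Ioo (-π) π},
    ∫⁻ y : ℝ × EuclideanSpace ℝ (Fin m),
      ENNReal.ofReal (|u x - u y| ^ p /
        Real.sqrt ((x.1 - y.1) ^ 2 + ‖x.2 - y.2‖ ^ 2) ^ ((m : ℝ) + 1 + s * p))

/-- The periodic Gagliardo seminorm `[u]^{per}_{W^{s,p}}`. -/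
noncomputable def gagSeminorm (m : ℕ) (s p : ℝ) (u : ℝ × EuclideanSpace ℝ (Fin m) → ℝ) :
    ℝ≥0∞ :=
  gagP m s p u ^ (1 / p)
/-- The periodic rearrangement in the first variable:
`u^{*per}(x₁,x') := (|u(·,x')|)^{*per}(x₁)`. -/
noncomputable def perRearr1 (m : ℕ) (u : ℝ × EuclideanSpace ℝ (Fin m) → ℝ) :
    ℝ × EuclideanSpace ℝ (Fin m) → ℝ := fun x =>
  perRearr (fun t => |u (t, x.2)|) x.1
/-- The periodic rearrangement `A^{*per} := {χ_A^{*per} > 0}` of a set which is `2π`-periodic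
in the first variable. -/
noncomputable def perRearrSet (m : ℕ) (A : Set (ℝ × EuclideanSpace ℝ (Fin m))) :
    Set (ℝ × EuclideanSpace ℝ (Fin m)) :=
  {x | 0 < perRearr1 m (A.indicator fun _ => (1 : ℝ)) x}

namespace Stmt9

/-! ### Part 1: the Jacobi triple product (limit form) and the monotonicity of theta -/

/-- finite `q`-Pochhammer symbol -/
noncomputable def qp (Q : ℝ) (n : ℕ) : ℝ := ∏ i ∈ Finset.range n, (1 - Q ^ (i + 1))

/-- reciprocal of `qp`, extended by zero to negative integers -/
noncomputable def rq (Q : ℝ) (n : ℤ) : ℝ := if n < 0 then 0 else (qp Q n.toNat)⁻¹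

lemma qp_pos {Q : ℝ} (h0 : 0 < Q) (h1 : Q < 1) (n : ℕ) : 0 < qp Q n :=
  Finset.prod_pos fun i _ => by
    have := pow_lt_one₀ h0.le h1 (Nat.succ_ne_zero i)
    simp only [Nat.succ_eq_add_one] at this
    linarith

lemma rq_pred {Q : ℝ} (h0 : 0 < Q) (h1 : Q < 1) (n : ℤ) :
    rq Q (n - 1) = (1 - Q ^ n) * rq Q n := by
  rcases lt_trichotomy n 0 with h | h | h
  · simp [rq, h, show n - 1 < 0 by omega]
  · subst h; simp [rq]
  · obtain ⟨k, rfl⟩ : ∃ k : ℕ, n = k + 1 := ⟨(n - 1).toNat, by omega⟩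
    have hk : 0 < qp Q k := qp_pos h0 h1 k
    have e1 : ((k : ℤ) + 1).toNat = k + 1 := by omega
    have hq : qp Q (k + 1) = qp Q k * (1 - Q ^ (k + 1)) := by
      simp [qp, Finset.prod_range_succ]
    have h3 : Q ^ (k + 1) < 1 := pow_lt_one₀ h0.le h1 (Nat.succ_ne_zero k)
    have h4 : (1 - Q ^ (k + 1)) ≠ 0 := by linarith
    have e2 : Q ^ ((k : ℤ) + 1) = Q ^ (k + 1) := by exact_mod_cast zpow_natCast Q (k + 1)
    rw [e2]
    simp only [rq, add_sub_cancel_right, Int.toNat_natCast, e1, hq]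
    rw [if_neg (by omega), if_neg (by omega)]
    field_simp

/-- the coefficients in the finite triple product -/
noncomputable def tb (q : ℝ) (N : ℕ) (k : ℤ) : ℝ :=
  qp (q ^ 2) (2 * N) * rq (q ^ 2) (N + k) * rq (q ^ 2) (N - k) * q ^ (k ^ 2)

lemma tb_succ {q : ℝ} (h0 : 0 < q) (h1 : q < 1) (N : ℕ) (k : ℤ) :
    tb q (N + 1) k = (1 + q ^ (4 * N + 2)) * tb q N k +
      q ^ (2 * N + 1) * (tb q N (k - 1) + tb q N (k + 1)) := by
  have hQ0 : 0 < q ^ 2 := by positivity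
  have hQ1 : q ^ 2 < 1 := pow_lt_one₀ h0.le h1 (by norm_num)
  have hne : q ≠ 0 := h0.ne'
  have a1 := rq_pred hQ0 hQ1 (N + 1 + k)
  have a2 := rq_pred hQ0 hQ1 (N + 1 + k - 1)
  have b1 := rq_pred hQ0 hQ1 (N + 1 - k)
  have b2 := rq_pred hQ0 hQ1 (N + 1 - k - 1)
  have hq : qp (q ^ 2) (2 * (N + 1)) =
      qp (q ^ 2) (2 * N) * (1 - (q ^ 2) ^ (2 * N + 1)) * (1 - (q ^ 2) ^ (2 * N + 2)) := by
    rw [show 2 * (N + 1) = 2 * N + 1 + 1 by ring]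
    simp [qp, Finset.prod_range_succ]
  unfold tb
  rw [hq]
  push_cast
  rw [show (N : ℤ) + (k - 1) = N + 1 + k - 1 - 1 by ring, show (N : ℤ) - (k - 1) = N + 1 - k by ring,
    show (N : ℤ) + (k + 1) = N + 1 + k by ring, show (N : ℤ) - (k + 1) = N + 1 - k - 1 - 1 by ring,
    show (N : ℤ) + k = N + 1 + k - 1 by ring, show (N : ℤ) - k = N + 1 - k - 1 by ring,
    a2, a1, b2, b1]
  have c1 : q ^ ((k - 1) ^ 2) = q ^ (k ^ 2) * q * (q ^ (k))⁻¹ * (q ^ (k))⁻¹ := by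
    rw [show (k - 1) ^ 2 = k ^ 2 + 1 + (-k) + (-k) by ring, zpow_add₀ hne, zpow_add₀ hne,
      zpow_add₀ hne, zpow_one, zpow_neg]
  have c2 : q ^ ((k + 1) ^ 2) = q ^ (k ^ 2) * q * (q ^ k) * (q ^ k) := by
    rw [show (k + 1) ^ 2 = k ^ 2 + 1 + k + k by ring, zpow_add₀ hne, zpow_add₀ hne,
      zpow_add₀ hne, zpow_one]
  have d1 : (q ^ 2) ^ ((N : ℤ) + 1 + k) = (q ^ N) ^ 2 * q ^ 2 * (q ^ k) ^ 2 := by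
    rw [zpow_add₀ hQ0.ne', zpow_add₀ hQ0.ne', zpow_one, zpow_natCast]
    rw [← zpow_natCast q 2, ← zpow_mul, ← zpow_natCast (q ^ k), ← zpow_mul]
    rw [mul_comm k]; norm_num; left; ring_nf; simp
  have d2 : (q ^ 2) ^ ((N : ℤ) + 1 + k - 1) = (q ^ N) ^ 2 * (q ^ k) ^ 2 := by
    rw [zpow_sub_one₀ hQ0.ne', d1]; field_simp
  have d3 : (q ^ 2) ^ ((N : ℤ) + 1 - k) = (q ^ N) ^ 2 * q ^ 2 * ((q ^ k)⁻¹) ^ 2 := by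
    rw [zpow_sub₀ hQ0.ne', zpow_add₀ hQ0.ne', zpow_one, zpow_natCast, div_eq_mul_inv]
    congr 1
    · ring
    · rw [inv_pow]; congr 1
      rw [← zpow_natCast q 2, ← zpow_mul, ← zpow_natCast (q ^ k), ← zpow_mul]
      rw [mul_comm k]
  have d4 : (q ^ 2) ^ ((N : ℤ) + 1 - k - 1) = (q ^ N) ^ 2 * ((q ^ k)⁻¹) ^ 2 := by
    rw [zpow_sub_one₀ hQ0.ne', d3]; field_simp
  rw [c1, c2, d1, d2, d3, d4]
  have hk : q ^ k ≠ 0 := zpow_ne_zero _ hne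
  have e1 : (q ^ 2) ^ (2 * N + 1) = (q ^ N) ^ 4 * q ^ 2 := by ring
  have e2 : (q ^ 2) ^ (2 * N + 2) = (q ^ N) ^ 4 * q ^ 4 := by ring
  have e3 : q ^ (4 * N + 2) = (q ^ N) ^ 4 * q ^ 2 := by ring
  have e4 : q ^ (2 * N + 1) = (q ^ N) ^ 2 * q := by ring
  rw [e1, e2, e3, e4]
  generalize q ^ N = y at *
  generalize q ^ k = x at *
  generalize q ^ (k ^ 2) = w at *
  generalize rq (q ^ 2) _ = ra at *
  generalize rq (q ^ 2) _ = rb at *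
  generalize qp (q ^ 2) _ = rc at *
  field_simp
  ring

lemma tb_hasSum {q : ℝ} (h0 : 0 < q) (h1 : q < 1) (z : ℂ) (hz : z ≠ 0) (N : ℕ) :
    HasSum (fun k : ℤ => (tb q N k : ℂ) * z ^ k)
      (∏ j ∈ Finset.range N, (1 + (q : ℂ) ^ (2 * j + 1) * z) * (1 + (q : ℂ) ^ (2 * j + 1) * z⁻¹)) := by
  induction N with
  | zero =>
    have : ∀ k : ℤ, k ≠ 0 → (tb q 0 k : ℂ) * z ^ k = 0 := by
      intro k hk
      rcases lt_or_gt_of_ne hk with h | h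
      · simp [tb, rq, h]
      · simp [tb, rq, h]
    have h := hasSum_single (f := fun k : ℤ => (tb q 0 k : ℂ) * z ^ k) 0 this
    simpa [tb, rq, qp] using h
  | succ N ih =>
    rw [Finset.prod_range_succ]
    have s1 : HasSum (fun k : ℤ => (tb q N (k - 1) : ℂ) * z ^ k)
        ((∏ j ∈ Finset.range N, (1 + (q : ℂ) ^ (2 * j + 1) * z) *
          (1 + (q : ℂ) ^ (2 * j + 1) * z⁻¹)) * z) := by
      have := (Equiv.subRight (1 : ℤ)).hasSum_iff.mpr (ih.mul_right z)
      refine this.congr_fun ?_ |> id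
      intro k
      simp only [Function.comp, Equiv.subRight_apply]
      rw [mul_assoc, ← zpow_add_one₀ hz]; simp
    have s2 : HasSum (fun k : ℤ => (tb q N (k + 1) : ℂ) * z ^ k)
        ((∏ j ∈ Finset.range N, (1 + (q : ℂ) ^ (2 * j + 1) * z) *
          (1 + (q : ℂ) ^ (2 * j + 1) * z⁻¹)) * z⁻¹) := by
      have := (Equiv.addRight (1 : ℤ)).hasSum_iff.mpr (ih.mul_right z⁻¹)
      refine this.congr_fun ?_ |> id
      intro k
      simp only [Function.comp, Equiv.coe_addRight]
      rw [mul_assoc, ← zpow_sub_one₀ hz]; simp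
    have := (ih.mul_left (1 + (q : ℂ) ^ (4 * N + 2))).add
      ((s1.add s2).mul_left ((q : ℂ) ^ (2 * N + 1)))
    have e1 : (fun k : ℤ => (tb q (N + 1) k : ℂ) * z ^ k) = fun b : ℤ =>
      (1 + (q : ℂ) ^ (4 * N + 2)) * (↑(tb q N b) * z ^ b) +
        (q : ℂ) ^ (2 * N + 1) * (↑(tb q N (b - 1)) * z ^ b + ↑(tb q N (b + 1)) * z ^ b) := by
      funext k
      rw [tb_succ h0 h1]; push_cast; ring
    rw [e1]
    refine (congrArg (HasSum _) ?_).mpr this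
    generalize (∏ j ∈ Finset.range N, (1 + (q : ℂ) ^ (2 * j + 1) * z) *
          (1 + (q : ℂ) ^ (2 * j + 1) * z⁻¹)) = P
    field_simp
    ring

end Stmt9

namespace Stmt9
open Filter Topology

lemma qp_lim {Q : ℝ} (h0 : 0 < Q) (h1 : Q < 1) :
    ∃ l : ℝ, 0 < l ∧ Tendsto (qp Q) atTop (𝓝 l) ∧ ∀ n, l ≤ qp Q n := by
  have hpos : ∀ i : ℕ, 0 < 1 + (-Q ^ (i + 1)) := fun i => by
    have := pow_lt_one₀ h0.le h1 (Nat.succ_ne_zero i)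
    simp only [Nat.succ_eq_add_one] at this
    linarith
  have hs : Summable fun i : ℕ => -Q ^ (i + 1) := by
    have := (summable_geometric_of_lt_one h0.le h1).mul_left Q
    refine (this.congr fun i => ?_).neg
    ring
  have hl := Real.summable_log_one_add_of_summable hs
  have he := Real.rexp_tsum_eq_tprod hpos hl
  have hm := (Real.multipliable_one_add_of_summable hs).hasProd.tendsto_prod_nat
  rw [← he] at hm
  have hq : (fun n => ∏ i ∈ Finset.range n, (1 + -Q ^ (i + 1))) = qp Q := by
    funext n; simp [qp, sub_eq_add_neg]
  rw [hq] at hm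
  have hanti : Antitone (qp Q) := by
    refine antitone_nat_of_succ_le fun n => ?_
    have : qp Q (n + 1) = qp Q n * (1 - Q ^ (n + 1)) := by simp [qp, Finset.prod_range_succ]
    rw [this]
    have h2 := qp_pos h0 h1 n
    have h3 : 0 < Q ^ (n + 1) := by positivity
    nlinarith
  exact ⟨_, Real.exp_pos _, hm, fun n => hanti.le_of_tendsto hm n⟩

lemma qp_le_one {Q : ℝ} (h0 : 0 < Q) (h1 : Q < 1) (n : ℕ) : qp Q n ≤ 1 :=
  Finset.prod_le_one (fun i _ => by
    have := pow_lt_one₀ h0.le h1 (Nat.succ_ne_zero i)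
    simp only [Nat.succ_eq_add_one] at this
    linarith) (fun i _ => by have : 0 < Q ^ (i + 1) := by positivity
                             linarith)

lemma summable_q_sq {q : ℝ} (h0 : 0 < q) (h1 : q < 1) : Summable fun k : ℤ => q ^ (k ^ 2) := by
  have hn : Summable fun n : ℕ => q ^ (((n : ℤ)) ^ 2) := by
    refine Summable.of_nonneg_of_le (fun n => by positivity) (fun n => ?_)
      (summable_geometric_of_lt_one h0.le h1)
    have : q ^ ((n : ℤ) ^ 2) = q ^ (n ^ 2) := by exact_mod_cast zpow_natCast q (n ^ 2)
    rw [this]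
    exact pow_le_pow_of_le_one h0.le h1.le (Nat.le_self_pow (by norm_num) n)
  refine Summable.of_nat_of_neg hn ?_
  simpa using hn

lemma tb_tendsto {q : ℝ} (h0 : 0 < q) (h1 : q < 1) {l : ℝ} (hl : 0 < l)
    (ht : Tendsto (qp (q ^ 2)) atTop (𝓝 l)) (k : ℤ) :
    Tendsto (fun N => tb q N k) atTop (𝓝 (l⁻¹ * q ^ (k ^ 2))) := by
  have a1 : Tendsto (fun N : ℕ => qp (q ^ 2) (2 * N)) atTop (𝓝 l) :=
    ht.comp (tendsto_id.const_mul_atTop' (by norm_num))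
  have a2 : ∀ j : ℤ, Tendsto (fun N : ℕ => rq (q ^ 2) (N + j)) atTop (𝓝 l⁻¹) := by
    intro j
    have : Tendsto (fun N : ℕ => (qp (q ^ 2) ((N : ℤ) + j).toNat)⁻¹) atTop (𝓝 l⁻¹) := by
      refine Tendsto.inv₀ (ht.comp ?_) hl.ne'
      refine tendsto_atTop.mpr fun b => ?_
      filter_upwards [eventually_ge_atTop (b + j.natAbs)] with N hN
      omega
    refine this.congr' ?_
    filter_upwards [eventually_ge_atTop (j.natAbs)] with N hN
    rw [rq, if_neg (by omega)]
  have := ((a1.mul (a2 k)).mul (a2 (-k))).mul_const (q ^ (k ^ 2))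
  have e : l * l⁻¹ * l⁻¹ * q ^ (k ^ 2) = l⁻¹ * q ^ (k ^ 2) := by field_simp
  rw [e] at this
  exact this

lemma theta_tendsto {q : ℝ} (h0 : 0 < q) (h1 : q < 1) : ∃ l : ℝ, 0 < l ∧ ∀ z : ℂ, ‖z‖ = 1 →
    Tendsto (fun N : ℕ => ∏ j ∈ Finset.range N, (1 + (q : ℂ) ^ (2 * j + 1) * z) *
      (1 + (q : ℂ) ^ (2 * j + 1) * z⁻¹)) atTop
      (𝓝 ((l : ℂ)⁻¹ * ∑' k : ℤ, ((q ^ (k ^ 2) : ℝ) : ℂ) * z ^ k)) := by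
  have hQ0 : 0 < q ^ 2 := by positivity
  have hQ1 : q ^ 2 < 1 := pow_lt_one₀ h0.le h1 (by norm_num)
  obtain ⟨l, hl, ht, hle⟩ := qp_lim hQ0 hQ1
  refine ⟨l, hl, fun z hz => ?_⟩
  have hz0 : z ≠ 0 := by rintro rfl; simp at hz
  have e : (fun N : ℕ => ∏ j ∈ Finset.range N, (1 + (q : ℂ) ^ (2 * j + 1) * z) *
      (1 + (q : ℂ) ^ (2 * j + 1) * z⁻¹)) = fun N => ∑' k : ℤ, (tb q N k : ℂ) * z ^ k := by
    funext N; exact (tb_hasSum h0 h1 z hz0 N).tsum_eq.symm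
  rw [e, ← tsum_mul_left]
  have hrq : ∀ n, 0 ≤ rq (q ^ 2) n ∧ rq (q ^ 2) n ≤ l⁻¹ := by
    intro n
    unfold rq
    split_ifs
    · exact ⟨le_rfl, by positivity⟩
    · exact ⟨(inv_pos.mpr (qp_pos hQ0 hQ1 _)).le, inv_anti₀ hl (hle _)⟩
  refine tendsto_tsum_of_dominated_convergence (bound := fun k : ℤ => l⁻¹ * l⁻¹ * q ^ (k ^ 2))
    ((summable_q_sq h0 h1).mul_left _) (fun k => ?_) (Eventually.of_forall fun N k => ?_)
  · have := (Complex.continuous_ofReal.tendsto _).comp (tb_tendsto h0 h1 hl ht k)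
    have := this.mul_const (z ^ k)
    simpa [mul_assoc] using this
  · rw [norm_mul, norm_zpow, hz, one_zpow, mul_one, Complex.norm_real, Real.norm_eq_abs]
    have hq := (qp_pos hQ0 hQ1 (2 * N)).le
    have hq1 := qp_le_one hQ0 hQ1 (2 * N)
    have hp : 0 < q ^ (k ^ 2) := by positivity
    unfold tb
    rw [abs_of_nonneg (mul_nonneg (mul_nonneg (mul_nonneg hq (hrq _).1) (hrq _).1) hp.le)]
    gcongr
    · exact (hrq _).1
    · calc _ ≤ 1 * l⁻¹ := by
            gcongr
            · exact (hrq _).1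
            · exact (hrq _).2
        _ = l⁻¹ := one_mul _
    · exact (hrq _).2

/-- The periodised Gaussian. -/
noncomputable def gs (a t : ℝ) : ℝ := ∑' n : ℤ, Real.exp (-a * (t + 2 * π * n) ^ 2)

lemma gs_summable {a : ℝ} (ha : 0 < a) (t : ℝ) :
    Summable fun n : ℤ => Real.exp (-a * (t + 2 * π * n) ^ 2) := by
  have h := summable_pow_mul_jacobiTheta₂_term_bound (2 * a * |t|) (T := 4 * π * a) (by positivity) 0
  refine Summable.of_nonneg_of_le (fun n => (Real.exp_pos _).le) (fun n => ?_) h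
  simp only [pow_zero, one_mul]
  refine Real.exp_le_exp.mpr ?_
  have h1 : -(t * n) ≤ |t| * |(n : ℝ)| := by rw [← abs_mul]; exact neg_le_abs _
  have h2 : 0 ≤ a * t ^ 2 := by positivity
  have h3 : 0 < π * a := by positivity
  push_cast
  nlinarith [mul_le_mul_of_nonneg_left h1 h3.le]

lemma gs_pos {a : ℝ} (ha : 0 < a) (t : ℝ) : 0 < gs a t :=
  (gs_summable ha t).tsum_pos (fun n => (Real.exp_pos _).le) 0 (Real.exp_pos _)

lemma gs_poisson {a : ℝ} (ha : 0 < a) (t : ℝ) :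
    ((gs a t : ℝ) : ℂ) = ((1 / (4 * π * a)) ^ (1 / 2 : ℝ) : ℝ) *
      ∑' k : ℤ, ((Real.exp (-(1 / (4 * a))) ^ (k ^ 2) : ℝ) : ℂ) *
        (Complex.exp (-(t * Complex.I))) ^ k := by
  have hpi := Real.pi_pos
  set A : ℝ := 1 / (4 * π * a) with hA
  have hA0 : 0 < A := by positivity
  have hAC : (A : ℂ) = 1 / (4 * π * a) := by rw [hA]; push_cast; rfl
  have hpiC : (π : ℂ) ≠ 0 := by exact_mod_cast hpi.ne'
  have haC : (a : ℂ) ≠ 0 := by exact_mod_cast ha.ne'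
  have h := Complex.tsum_exp_neg_quadratic (a := (A : ℂ)) (by simpa using hA0)
    (-(Complex.I * t / (2 * π)))
  have e1 : ∀ n : ℤ, Complex.exp (-π * A * n ^ 2 + 2 * π * (-(Complex.I * t / (2 * π))) * n) =
      ((Real.exp (-(1 / (4 * a))) ^ (n ^ 2) : ℝ) : ℂ) * (Complex.exp (-(t * Complex.I))) ^ n := by
    intro n
    rw [Complex.ofReal_zpow, Complex.ofReal_exp, ← Complex.exp_int_mul, ← Complex.exp_int_mul,
      ← Complex.exp_add]
    congr 1
    rw [hAC]
    push_cast
    field_simp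
  have e2 : ∀ n : ℤ, Complex.exp (-π / A * (n + Complex.I * (-(Complex.I * t / (2 * π)))) ^ 2) =
      ((Real.exp (-a * (t + 2 * π * n) ^ 2) : ℝ) : ℂ) := by
    intro n
    rw [Complex.ofReal_exp]
    congr 1
    rw [hAC]
    have : Complex.I * (-(Complex.I * t / (2 * π))) = t / (2 * π) := by
      rw [mul_neg, ← mul_div_assoc, ← mul_assoc, Complex.I_mul_I]; ring
    rw [this]
    push_cast
    field_simp
    ring
  simp_rw [e1, e2] at h
  rw [h, ← Complex.ofReal_tsum, ← mul_assoc]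
  change _ = _ * ((gs a t : ℝ) : ℂ)
  rw [show (1 / 2 : ℂ) = ((1 / 2 : ℝ) : ℂ) by push_cast; rfl, ← Complex.ofReal_cpow hA0.le]
  have : (((A ^ (1 / 2 : ℝ) : ℝ)) : ℂ) ≠ 0 := by
    exact_mod_cast (Real.rpow_pos_of_pos hA0 _).ne'
  field_simp

lemma gs_strict {a : ℝ} (ha : 0 < a) {t t' : ℝ} (h : cos t' < cos t) : gs a t' < gs a t := by
  have hpi := Real.pi_pos
  set q : ℝ := Real.exp (-(1 / (4 * a))) with hq
  have h0 : 0 < q := Real.exp_pos _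
  have h1 : q < 1 := by
    rw [hq, Real.exp_lt_one_iff]
    have : 0 < 1 / (4 * a) := by positivity
    linarith
  obtain ⟨l, hl, hlim⟩ := theta_tendsto h0 h1
  set A : ℝ := (1 / (4 * π * a)) ^ (1 / 2 : ℝ) with hA
  have hA0 : 0 < A := Real.rpow_pos_of_pos (by positivity) _
  let P : ℕ → ℝ → ℝ := fun N t => ∏ j ∈ Finset.range N,
    (1 + 2 * q ^ (2 * j + 1) * cos t + (q ^ (2 * j + 1)) ^ 2)
  have key : ∀ t : ℝ, Tendsto (fun N => P N t) atTop (𝓝 (l⁻¹ * A⁻¹ * gs a t)) := by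
    intro t
    have hz : ‖Complex.exp (-(t * Complex.I))‖ = 1 := by
      rw [Complex.norm_exp]; simp
    have h2 := hlim _ hz
    have h3 := gs_poisson ha t
    rw [← hA, ← hq] at h3
    have hAC : (A : ℂ) ≠ 0 := by exact_mod_cast hA0.ne'
    have h4 : (l : ℂ)⁻¹ * ∑' k : ℤ, ((q ^ (k ^ 2) : ℝ) : ℂ) *
        (Complex.exp (-(t * Complex.I))) ^ k = ((l⁻¹ * A⁻¹ * gs a t : ℝ) : ℂ) := by
      push_cast
      rw [h3]
      field_simp
      push_cast
      rfl
    rw [h4] at h2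
    have h5 := (Complex.continuous_re.tendsto _).comp h2
    rw [Complex.ofReal_re] at h5
    refine h5.congr fun N => ?_
    have : (∏ j ∈ Finset.range N, (1 + (q : ℂ) ^ (2 * j + 1) * Complex.exp (-(t * Complex.I))) *
      (1 + (q : ℂ) ^ (2 * j + 1) * (Complex.exp (-(t * Complex.I)))⁻¹)) = ((P N t : ℝ) : ℂ) := by
      simp only [P]
      push_cast
      refine Finset.prod_congr rfl fun j _ => ?_
      rw [Complex.cos, ← Complex.exp_neg, neg_neg]
      have e : Complex.exp (-(t * Complex.I)) * Complex.exp (t * Complex.I) = 1 := by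
        rw [← Complex.exp_add]; simp
      rw [neg_mul]
      linear_combination ((q : ℂ) ^ (2 * j + 1)) ^ 2 * e
    simp only [Function.comp, this, Complex.ofReal_re]
  have fpos : ∀ (j : ℕ) (t : ℝ), 0 < 1 + 2 * q ^ (2 * j + 1) * cos t + (q ^ (2 * j + 1)) ^ 2 := by
    intro j t
    have h2 : q ^ (2 * j + 1) < 1 := pow_lt_one₀ h0.le h1 (by omega)
    have h3 : 0 < q ^ (2 * j + 1) := by positivity
    have := Real.neg_one_le_cos t
    nlinarith
  set r := (1 + 2 * q * cos t' + q ^ 2) / (1 + 2 * q * cos t + q ^ 2) with hr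
  have f0 := fpos 0 t
  have f0' := fpos 0 t'
  norm_num at f0 f0'
  have hr1 : r < 1 := by
    rw [hr, div_lt_one f0]; nlinarith
  have hle : ∀ N, P (N + 1) t' ≤ r * P (N + 1) t := by
    intro N
    simp only [P]
    rw [Finset.prod_range_succ', Finset.prod_range_succ']
    norm_num
    have : (∏ j ∈ Finset.range N, (1 + 2 * q ^ (2 * (j + 1) + 1) * cos t' + (q ^ (2 * (j + 1) + 1)) ^ 2))
      ≤ ∏ j ∈ Finset.range N, (1 + 2 * q ^ (2 * (j + 1) + 1) * cos t + (q ^ (2 * (j + 1) + 1)) ^ 2) := by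
      refine Finset.prod_le_prod (fun j _ => (fpos (j + 1) t').le) fun j _ => ?_
      have h3 : 0 < q ^ (2 * (j + 1) + 1) := by positivity
      nlinarith
    calc _ ≤ (∏ j ∈ Finset.range N, (1 + 2 * q ^ (2 * (j + 1) + 1) * cos t +
          (q ^ (2 * (j + 1) + 1)) ^ 2)) * (1 + 2 * q * cos t' + q ^ 2) := by gcongr
      _ = _ := by
          rw [hr, mul_comm (Finset.prod _ _), mul_comm (Finset.prod _ _), ← mul_assoc,
            div_mul_cancel₀ _ f0.ne']
  have h6 := le_of_tendsto_of_tendsto' ((key t').comp (tendsto_add_atTop_nat 1))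
    (((key t).comp (tendsto_add_atTop_nat 1)).const_mul r) hle
  have hg := gs_pos ha t
  have hc : 0 < l⁻¹ * A⁻¹ := by positivity
  have h7 : l⁻¹ * A⁻¹ * gs a t' < l⁻¹ * A⁻¹ * gs a t := by
    have : 0 < l⁻¹ * A⁻¹ * gs a t := by positivity
    nlinarith
  exact lt_of_mul_lt_mul_left h7 hc.le

end Stmt9

namespace Stmt9
open Filter Topology

/-! ### Part 2: the periodised kernel -/

/-- the kernel -/
noncomputable def kr (β t r : ℝ) : ℝ≥0∞ := ENNReal.ofReal ((Real.sqrt (t ^ 2 + r ^ 2)) ^ (-β))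

/-- the periodised kernel -/
noncomputable def KK (β t r : ℝ) : ℝ≥0∞ := ∑' n : ℤ, kr β (t + 2 * π * n) r

lemma kr_neg (β t r : ℝ) : kr β (-t) r = kr β t r := by simp [kr]

lemma KK_neg (β t r : ℝ) : KK β (-t) r = KK β t r := by
  unfold KK
  rw [← (Equiv.neg ℤ).tsum_eq]
  refine tsum_congr fun n => ?_
  rw [← kr_neg]
  congr 1
  simp
  ring

lemma KK_add (β t r : ℝ) : KK β (t + 2 * π) r = KK β t r := by
  unfold KK
  rw [← (Equiv.addRight (1 : ℤ)).tsum_eq (fun n : ℤ => kr β (t + 2 * π * n) r)]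
  refine tsum_congr fun n => ?_
  congr 1
  simp
  ring

lemma measurable_kr (β : ℝ) : Measurable fun p : ℝ × ℝ => kr β p.1 p.2 := by
  unfold kr; fun_prop

lemma measurable_KK (β : ℝ) : Measurable fun p : ℝ × ℝ => KK β p.1 p.2 := by
  unfold KK
  refine Measurable.tsum fun n => ?_
  exact (measurable_kr β).comp (f := fun p : ℝ × ℝ => (p.1 + 2 * π * n, p.2)) (by fun_prop)

lemma cos_ne_one_shift {t : ℝ} (h : cos t ≠ 1) (n : ℤ) : t + 2 * π * n ≠ 0 := by
  intro h2
  apply h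
  rw [Real.cos_eq_one_iff]
  exact ⟨-n, by push_cast; linarith⟩

lemma kr_gamma {β : ℝ} (hβ : 1 < β) {t r : ℝ} (h : 0 < t ^ 2 + r ^ 2) :
    ENNReal.ofReal (Real.Gamma (β / 2)) * kr β t r =
      ∫⁻ x in Set.Ioi (0 : ℝ), ENNReal.ofReal (x ^ (β / 2 - 1) * Real.exp (-(r ^ 2 * x))) *
        ENNReal.ofReal (Real.exp (-x * t ^ 2)) := by
  have hb : 0 < β / 2 := by linarith
  have h1 := Real.integral_rpow_mul_exp_neg_mul_Ioi hb h
  have hne : (1 / (t ^ 2 + r ^ 2)) ^ (β / 2) * Real.Gamma (β / 2) ≠ 0 :=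
    (mul_pos (Real.rpow_pos_of_pos (by positivity) _) (Real.Gamma_pos_of_pos hb)).ne'
  have hIntg : Integrable (fun x : ℝ => x ^ (β / 2 - 1) * Real.exp (-((t ^ 2 + r ^ 2) * x)))
      (volume.restrict (Set.Ioi 0)) := by
    by_contra hc
    rw [integral_undef hc] at h1
    exact hne h1.symm
  have h2 := ofReal_integral_eq_lintegral_ofReal hIntg (by
    filter_upwards [ae_restrict_mem measurableSet_Ioi] with x hx
    have : (0 : ℝ) < x := hx
    simp only [Pi.zero_apply]
    positivity)
  rw [h1] at h2
  have h3 : (1 / (t ^ 2 + r ^ 2)) ^ (β / 2) = (Real.sqrt (t ^ 2 + r ^ 2)) ^ (-β) := by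
    rw [Real.sqrt_eq_rpow, ← Real.rpow_mul h.le, one_div, Real.inv_rpow h.le, ← Real.rpow_neg h.le]
    congr 1; ring
  rw [kr, ← ENNReal.ofReal_mul (Real.Gamma_pos_of_pos hb).le, ← h3, mul_comm, h2]
  refine setLIntegral_congr_fun measurableSet_Ioi fun x hx => ?_
  have : (0 : ℝ) < x := hx
  rw [← ENNReal.ofReal_mul (by positivity), mul_assoc, ← Real.exp_add]
  congr 3
  ring

lemma KK_gamma {β : ℝ} (hβ : 1 < β) {t r : ℝ} (h : r ≠ 0 ∨ cos t ≠ 1) :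
    ENNReal.ofReal (Real.Gamma (β / 2)) * KK β t r =
      ∫⁻ x in Set.Ioi (0 : ℝ), ENNReal.ofReal (x ^ (β / 2 - 1) * Real.exp (-(r ^ 2 * x))) *
        ∑' n : ℤ, ENNReal.ofReal (Real.exp (-x * (t + 2 * π * n) ^ 2)) := by
  have hpos : ∀ n : ℤ, 0 < (t + 2 * π * n) ^ 2 + r ^ 2 := by
    intro n
    rcases h with h | h
    · positivity
    · have := cos_ne_one_shift h n
      positivity
  unfold KK
  rw [← ENNReal.tsum_mul_left]
  simp_rw [fun n : ℤ => kr_gamma hβ (hpos n), ← ENNReal.tsum_mul_left]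
  rw [lintegral_tsum]
  intro n
  fun_prop

lemma KK_lt_top {β : ℝ} (hβ : 1 < β) {t : ℝ} (r : ℝ) (h : cos t ≠ 1) : KK β t r < ⊤ := by
  have hpi := Real.pi_pos
  have hs := (Real.summable_one_div_int_add_rpow (t / (2 * π)) β).mpr hβ
  have hs2 : Summable fun n : ℤ => (2 * π) ^ (-β) * (1 / |(n : ℝ) + t / (2 * π)| ^ β) :=
    hs.mul_left _
  have hle : KK β t r ≤ ∑' n : ℤ, ENNReal.ofReal ((2 * π) ^ (-β) * (1 / |(n : ℝ) + t / (2 * π)| ^ β)) := by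
    refine ENNReal.tsum_le_tsum fun n => ENNReal.ofReal_le_ofReal ?_
    have h0 := cos_ne_one_shift h n
    have e : (2 * π) ^ (-β) * (1 / |(n : ℝ) + t / (2 * π)| ^ β) = |t + 2 * π * n| ^ (-β) := by
      rw [one_div, ← Real.rpow_neg (abs_nonneg _), ← Real.mul_rpow (by positivity) (abs_nonneg _)]
      congr 1
      rw [← abs_of_pos (show 0 < 2 * π by positivity), ← abs_mul, abs_of_pos (show 0 < 2 * π by positivity)]
      congr 1
      field_simp
      ring
    rw [e]
    refine Real.rpow_le_rpow_of_nonpos (abs_pos.mpr h0) ?_ (by linarith)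
    rw [← Real.sqrt_sq_eq_abs]
    exact Real.sqrt_le_sqrt (by nlinarith [sq_nonneg r])
  refine lt_of_le_of_lt hle ?_
  rw [← ENNReal.ofReal_tsum_of_nonneg (fun n => by positivity) hs2]
  exact ENNReal.ofReal_lt_top

lemma KK_strict {β : ℝ} (hβ : 1 < β) {t t' r : ℝ} (hc : cos t' < cos t) (h : r ≠ 0 ∨ cos t ≠ 1) :
    KK β t' r < KK β t r := by
  have hb : 0 < β / 2 := by linarith
  have hG := Real.Gamma_pos_of_pos hb
  have hc1 : cos t' ≠ 1 := by have := Real.cos_le_one t; linarith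
  have e1 := KK_gamma hβ (t := t') (r := r) (Or.inr hc1)
  have e2 := KK_gamma hβ h
  have hfin := KK_lt_top hβ r hc1
  have hlt : ENNReal.ofReal (Real.Gamma (β / 2)) * KK β t' r <
      ENNReal.ofReal (Real.Gamma (β / 2)) * KK β t r := by
    have hne : ENNReal.ofReal (Real.Gamma (β / 2)) * KK β t' r ≠ ⊤ :=
      ENNReal.mul_ne_top ENNReal.ofReal_ne_top hfin.ne
    rw [e1] at hne
    rw [e1, e2]
    refine lintegral_strict_mono ?_ (Measurable.aemeasurable ?_) hne ?_
    · simp [Measure.restrict_eq_zero]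
    · refine Measurable.mul (by fun_prop) (Measurable.tsum fun n => by fun_prop)
    · filter_upwards [ae_restrict_mem measurableSet_Ioi] with x hx
      have hx0 : (0 : ℝ) < x := hx
      have g1 := gs_strict hx0 hc
      rw [← ENNReal.ofReal_tsum_of_nonneg (fun n => (Real.exp_pos _).le) (gs_summable hx0 t),
        ← ENNReal.ofReal_tsum_of_nonneg (fun n => (Real.exp_pos _).le) (gs_summable hx0 t')]
      have hp : ENNReal.ofReal (x ^ (β / 2 - 1) * Real.exp (-(r ^ 2 * x))) ≠ 0 := by
        rw [Ne, ENNReal.ofReal_eq_zero, not_le]; positivity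
      exact (ENNReal.mul_lt_mul_iff_right hp ENNReal.ofReal_ne_top).mpr
        ((ENNReal.ofReal_lt_ofReal_iff (gs_pos hx0 t)).mpr g1)
  exact lt_of_mul_lt_mul_left' hlt

end Stmt9

namespace Stmt9
open Filter Topology

/-! ### Part 3: periodic integrals, folding -/

lemma lint_shift_Ioc (g : ℝ → ℝ≥0∞) (a b c : ℝ) :
    ∫⁻ x in Set.Ioc a b, g (x + c) = ∫⁻ x in Set.Ioc (a + c) (b + c), g x := by
  have h := (measurePreserving_add_right (volume : Measure ℝ) c).setLIntegral_comp_preimage_emb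
    (measurableEmbedding_addRight c) g (Set.Ioc (a + c) (b + c))
  rw [← h]
  congr 2
  ext x; simp

lemma lint_reflect_Ioo (g : ℝ → ℝ≥0∞) (a b c : ℝ) :
    ∫⁻ x in Set.Ioo a b, g (c - x) = ∫⁻ x in Set.Ioo (c - b) (c - a), g x := by
  have h := (Measure.measurePreserving_sub_left (volume : Measure ℝ) c).setLIntegral_comp_preimage_emb
    (MeasurableEquiv.subLeft c).measurableEmbedding g (Set.Ioo (c - b) (c - a))
  rw [← h]
  congr 2
  ext x; simp [and_comm]

lemma lint_per_Ioc {g : ℝ → ℝ≥0∞} (hg : ∀ x, g (x + 2 * π) = g x) (c : ℝ) :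
    ∫⁻ x in Set.Ioc (-π + c) (π + c), g x = ∫⁻ x in Set.Ioc (-π) π, g x := by
  have hT : 0 < 2 * π := by have := Real.pi_pos; positivity
  have h1 := isAddFundamentalDomain_Ioc hT (-π + c)
  have h2 := isAddFundamentalDomain_Ioc hT (-π)
  have h3 := h1.setLIntegral_eq h2 g (by
    rintro ⟨_, k, rfl⟩ x
    have hp : Function.Periodic g (2 * π) := hg
    have := hp.int_mul k x
    simp only [AddSubgroup.vadd_def, vadd_eq_add, zsmul_eq_mul]
    rw [add_comm]; exact this)
  rw [show -π + c + 2 * π = π + c by ring, show -π + 2 * π = π by ring] at h3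
  exact h3

lemma lint_per_shift {g : ℝ → ℝ≥0∞} (hg : ∀ x, g (x + 2 * π) = g x) (c : ℝ) :
    ∫⁻ x in Set.Ioo (-π) π, g (x + c) = ∫⁻ x in Set.Ioo (-π) π, g x := by
  rw [setLIntegral_congr (Ioo_ae_eq_Ioc (a := -π) (b := π)),
    setLIntegral_congr (f := g) (Ioo_ae_eq_Ioc (a := -π) (b := π)), lint_shift_Ioc, lint_per_Ioc hg]

lemma lint_per_reflect {g : ℝ → ℝ≥0∞} (hg : ∀ x, g (x + 2 * π) = g x) (c : ℝ) :
    ∫⁻ x in Set.Ioo (-π) π, g (2 * c - x) = ∫⁻ x in Set.Ioo (-π) π, g x := by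
  rw [lint_reflect_Ioo, setLIntegral_congr (Ioo_ae_eq_Ioc), show 2 * c - π = -π + 2 * c by ring,
    show 2 * c - -π = π + 2 * c by ring, lint_per_Ioc hg,
    setLIntegral_congr (f := g) (Ioo_ae_eq_Ioc (a := -π) (b := π))]

lemma lint_fold {h : ℝ → ℝ≥0∞} (hh : Measurable h) :
    ∫⁻ x, h x = ∫⁻ x in Set.Ioo (-π) π, ∑' n : ℤ, h (x - 2 * π * n) := by
  have hT : 0 < 2 * π := by have := Real.pi_pos; positivity
  have hu := iUnion_Ioc_add_zsmul hT (-π)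
  have hd := Set.pairwise_disjoint_Ioc_add_zsmul (-π) (2 * π)
  rw [← setLIntegral_univ, ← hu, lintegral_iUnion (fun n => measurableSet_Ioc) hd,
    lintegral_tsum (fun n => by fun_prop), ← (Equiv.neg ℤ).tsum_eq]
  refine tsum_congr fun n => ?_
  have := lint_shift_Ioc h (-π) π (-(2 * π * n))
  rw [setLIntegral_congr (f := fun x => h (x - 2 * π * n)) (Ioo_ae_eq_Ioc (a := -π) (b := π))]
  simp only [sub_eq_add_neg]
  rw [this]
  congr 3
  · simp; ring
  · simp; ring

/-- the Euclidean space -/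
abbrev Em (m : ℕ) := EuclideanSpace ℝ (Fin m)
/-- the ambient space -/
abbrev Xm (m : ℕ) := ℝ × EuclideanSpace ℝ (Fin m)

/-- measure on the strip -/
noncomputable def SM (m : ℕ) : Measure (Xm m) :=
  (volume.restrict (Set.Ioo (-π) π)).prod (volume : Measure (Em m))

instance (m : ℕ) : SFinite (SM m) := by unfold SM; infer_instance

lemma SM_eq (m : ℕ) : (volume : Measure (Xm m)).restrict {x : Xm m | x.1 ∈ Set.Ioo (-π) π} = SM m := by
  have : {x : Xm m | x.1 ∈ Set.Ioo (-π) π} = Set.Ioo (-π) π ×ˢ Set.univ := by ext; simp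
  rw [this, SM, Measure.volume_eq_prod, ← Measure.prod_restrict, Measure.restrict_univ]

/-- reflection in the first variable -/
def rf {m : ℕ} (c : ℝ) (x : Xm m) : Xm m := (2 * c - x.1, x.2)

lemma continuous_rf {m : ℕ} (c : ℝ) : Continuous (rf (m := m) c) := by unfold rf; fun_prop

lemma rf_rf {m : ℕ} (c : ℝ) (x : Xm m) : rf c (rf c x) = x := by simp [rf]

/-- periodic functions -/
def Per {m : ℕ} {α : Type*} (u : Xm m → α) : Prop := ∀ x : Xm m, u (x.1 + 2 * π, x.2) = u x

lemma lint_rf {m : ℕ} {G : Xm m → ℝ≥0∞} (hG : Measurable G) (hp : Per G) (c : ℝ) :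
    ∫⁻ x, G (rf c x) ∂(SM m) = ∫⁻ x, G x ∂(SM m) := by
  have h2 : Measurable fun x => G (rf c x) := hG.comp (continuous_rf c).measurable
  rw [SM, lintegral_prod_symm _ h2.aemeasurable, lintegral_prod_symm _ hG.aemeasurable]
  refine lintegral_congr fun y => ?_
  exact lint_per_reflect (g := fun a => G (a, y)) (fun a => hp (a, y)) c

lemma lint_sh {m : ℕ} {G : Xm m → ℝ≥0∞} (hG : Measurable G) (hp : Per G) (c : ℝ) :
    ∫⁻ x, G (x.1 + c, x.2) ∂(SM m) = ∫⁻ x, G x ∂(SM m) := by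
  have h2 : Measurable fun x : Xm m => G (x.1 + c, x.2) := hG.comp (by fun_prop)
  rw [SM, lintegral_prod_symm _ h2.aemeasurable, lintegral_prod_symm _ hG.aemeasurable]
  refine lintegral_congr fun y => ?_
  exact lint_per_shift (g := fun a => G (a, y)) (fun a => hp (a, y)) c

lemma Per.shift_int {m : ℕ} {α : Type*} {u : Xm m → α} (hp : Per u) (n : ℤ) (x : Xm m) :
    u (x.1 + 2 * π * n, x.2) = u x := by
  have h : Function.Periodic (fun a => u (a, x.2)) (2 * π) := fun a => hp (a, x.2)
  have := h.int_mul n x.1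
  rw [mul_comm]; exact this

lemma lint_fold_X {m : ℕ} {G : Xm m → ℝ≥0∞} (hG : Measurable G) :
    ∫⁻ x, G x = ∫⁻ x, ∑' n : ℤ, G (x.1 - 2 * π * n, x.2) ∂(SM m) := by
  have h2 : Measurable fun x : Xm m => ∑' n : ℤ, G (x.1 - 2 * π * n, x.2) :=
    Measurable.tsum fun n => hG.comp (by fun_prop)
  rw [SM, lintegral_prod_symm _ h2.aemeasurable, Measure.volume_eq_prod,
    lintegral_prod_symm _ hG.aemeasurable]
  refine lintegral_congr fun y => ?_
  exact lint_fold (h := fun a => G (a, y)) (by fun_prop)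

/-- folded form -/
noncomputable def gK {m : ℕ} (β : ℝ) (x y : Xm m) : ℝ≥0∞ := KK β (x.1 - y.1) ‖x.2 - y.2‖

lemma measurable_gK {m : ℕ} (β : ℝ) : Measurable fun p : Xm m × Xm m => gK β p.1 p.2 :=
  (measurable_KK β).comp (f := fun p : Xm m × Xm m => (p.1.1 - p.2.1, ‖p.1.2 - p.2.2‖)) (by fun_prop)

lemma gagP_integrand (m : ℕ) (s : ℝ) (hs : 0 < s) (u : Xm m → ℝ) (x y : Xm m) :
    ENNReal.ofReal (|u x - u y| ^ (1 : ℝ) /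
        Real.sqrt ((x.1 - y.1) ^ 2 + ‖x.2 - y.2‖ ^ 2) ^ ((m : ℝ) + 1 + s * 1)) =
      ENNReal.ofReal |u x - u y| * kr ((m : ℝ) + 1 + s) (x.1 - y.1) ‖x.2 - y.2‖ := by
  rw [Real.rpow_one, kr, ← ENNReal.ofReal_mul (abs_nonneg _), Real.rpow_neg (Real.sqrt_nonneg _),
    div_eq_mul_inv, mul_one]

lemma gagP_unfold (m : ℕ) (s : ℝ) (hs : 0 < s) (u : Xm m → ℝ) : gagP m s 1 u =
    ∫⁻ x, ∫⁻ y, ENNReal.ofReal |u x - u y| *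
      kr ((m : ℝ) + 1 + s) (x.1 - y.1) ‖x.2 - y.2‖ ∂(volume : Measure (Xm m)) ∂(SM m) := by
  rw [gagP, SM_eq]
  simp_rw [gagP_integrand m s hs u]

lemma gagP_fold (m : ℕ) (s : ℝ) (hs : 0 < s) (u : Xm m → ℝ) (hu : Measurable u) (hp : Per u) :
    gagP m s 1 u = ∫⁻ p, ENNReal.ofReal |u p.1 - u p.2| * gK ((m : ℝ) + 1 + s) p.1 p.2
      ∂((SM m).prod (SM m)) := by
  have hmk := measurable_kr ((m : ℝ) + 1 + s)
  rw [gagP_unfold m s hs]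
  have hm : Measurable fun p : Xm m × Xm m =>
      ENNReal.ofReal |u p.1 - u p.2| * gK ((m : ℝ) + 1 + s) p.1 p.2 := by
    have h1 : Measurable fun p : Xm m × Xm m => ENNReal.ofReal |u p.1 - u p.2| := by
      have := hu; fun_prop
    exact h1.mul (measurable_gK _)
  rw [lintegral_prod _ hm.aemeasurable]
  refine lintegral_congr fun x => ?_
  rw [lint_fold_X]
  · refine lintegral_congr fun y => ?_
    rw [gK, KK, ← ENNReal.tsum_mul_left]
    refine tsum_congr fun n => ?_
    have := hp.shift_int (-n) y
    rw [show y.1 - 2 * π * n = y.1 + 2 * π * ((-n : ℤ) : ℝ) by push_cast; ring, this]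
    congr 2
    push_cast; ring
  · have h1 : Measurable fun y : Xm m => ENNReal.ofReal |u x - u y| := by fun_prop
    refine h1.mul ?_
    exact hmk.comp (f := fun y : Xm m => (x.1 - y.1, ‖x.2 - y.2‖)) (by fun_prop)

end Stmt9

namespace Stmt9
open Filter Topology

/-! ### Part 4: polarization -/

/-- polarization with respect to the reflection at `c` -/
noncomputable def pol {m : ℕ} (c : ℝ) (w : Xm m → ℝ) (x : Xm m) : ℝ :=
  if 0 ≤ Real.sin (x.1 - c) then max (w x) (w (rf c x)) else min (w x) (w (rf c x))

lemma sin_rf {m : ℕ} (c : ℝ) (x : Xm m) : Real.sin ((rf c x).1 - c) = -Real.sin (x.1 - c) := by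
  rw [← Real.sin_neg]; congr 1; simp [rf]; ring

lemma pol_pos {m : ℕ} {c : ℝ} {w : Xm m → ℝ} {x : Xm m} (h : 0 < Real.sin (x.1 - c)) :
    pol c w x = max (w x) (w (rf c x)) ∧ pol c w (rf c x) = min (w x) (w (rf c x)) := by
  have h2 : ¬ (0 ≤ Real.sin ((rf c x).1 - c)) := by rw [sin_rf]; linarith
  simp only [pol, if_pos h.le, if_neg h2, rf_rf, true_and]
  exact min_comm _ _

lemma pol_neg {m : ℕ} {c : ℝ} {w : Xm m → ℝ} {x : Xm m} (h : Real.sin (x.1 - c) < 0) :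
    pol c w x = min (w x) (w (rf c x)) ∧ pol c w (rf c x) = max (w x) (w (rf c x)) := by
  have h2 : (0 ≤ Real.sin ((rf c x).1 - c)) := by rw [sin_rf]; linarith
  simp only [pol, if_neg (not_le.2 h), if_pos h2, rf_rf, true_and]
  exact max_comm _ _

lemma Per.rf {m : ℕ} {α : Type*} {u : Xm m → α} (hp : Per u) (c : ℝ) :
    Per fun x => u (rf c x) := by
  intro x
  have := hp (2 * c - (x.1 + 2 * π), x.2)
  simp only [Stmt9.rf]
  rw [← this]; simp only; congr 2; ring

lemma Per.pol {m : ℕ} {w : Xm m → ℝ} (hp : Per w) (c : ℝ) : Per (pol c w) := by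
  intro x
  have h1 := hp.rf c x
  have h2 := hp x
  simp only [Stmt9.pol] at *
  rw [h1, h2, show x.1 + 2 * π - c = x.1 - c + 2 * π by ring, Real.sin_add_two_pi]

lemma Per.rf_fix {m : ℕ} {α : Type*} {u : Xm m → α} (hp : Per u) {c : ℝ} {x : Xm m}
    (h : Real.sin (x.1 - c) = 0) : u (Stmt9.rf c x) = u x := by
  obtain ⟨n, hn⟩ := Real.sin_eq_zero_iff.1 h
  have := hp.shift_int (-n) x
  rw [← this]
  simp only [Stmt9.rf]
  congr 2
  push_cast
  linarith

lemma continuous_pol {m : ℕ} {w : Xm m → ℝ} (hw : Continuous w) (hp : Per w) (c : ℝ) :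
    Continuous (pol c w) := by
  have hr := continuous_rf (m := m) c
  refine Continuous.if_le (by fun_prop) (by fun_prop) continuous_const (by fun_prop) ?_
  intro x hx
  have := hp.rf_fix hx.symm
  rw [this]; simp

lemma measurable_pol {m : ℕ} {w : Xm m → ℝ} (hw : Measurable w) (c : ℝ) :
    Measurable (pol c w) := by
  have hr := (continuous_rf (m := m) c).measurable
  refine Measurable.ite (measurableSet_le (by fun_prop) (by fun_prop)) (by fun_prop) (by fun_prop)

lemma alg_le (a a' b b' : ℝ) {K K' : ℝ≥0∞} (hK : K ≠ ⊤) (h : K' ≤ K) :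
    (ENNReal.ofReal |max a a' - max b b'| + ENNReal.ofReal |min a a' - min b b'|) * K +
      (ENNReal.ofReal |max a a' - min b b'| + ENNReal.ofReal |min a a' - max b b'|) * K' ≤
    (ENNReal.ofReal |a - b| + ENNReal.ofReal |a' - b'|) * K +
      (ENNReal.ofReal |a - b'| + ENNReal.ofReal |a' - b|) * K' := by
  have hK' : K' ≠ ⊤ := ne_top_of_le_ne_top hK h
  lift K to NNReal using hK
  lift K' to NNReal using hK'
  have h : (K' : ℝ) ≤ K := by exact_mod_cast h
  have h0 : (0 : ℝ) ≤ K' := K'.2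
  rw [← ENNReal.ofReal_coe_nnreal, ← ENNReal.ofReal_coe_nnreal]
  simp only [← ENNReal.ofReal_add (abs_nonneg _) (abs_nonneg _)]
  rw [← ENNReal.ofReal_mul (by positivity), ← ENNReal.ofReal_mul (by positivity),
    ← ENNReal.ofReal_mul (by positivity), ← ENNReal.ofReal_mul (by positivity),
    ← ENNReal.ofReal_add (by positivity) (by positivity),
    ← ENNReal.ofReal_add (by positivity) (by positivity)]
  apply ENNReal.ofReal_le_ofReal
  have key : ∀ a a' b b' : ℝ, a ≤ a' → b' ≤ b → |a - b'| + |a' - b| ≤ |a - b| + |a' - b'| := by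
    intro a a' b b' h1 h2
    rcases abs_cases (a - b') with h3 | h3 <;> rcases abs_cases (a' - b) with h4 | h4 <;>
    rcases abs_cases (a - b) with h5 | h5 <;> rcases abs_cases (a' - b') with h6 | h6 <;> linarith
  rcases le_total a a' with h1 | h1 <;> rcases le_total b b' with h2 | h2 <;>
    simp only [max_eq_left, max_eq_right, min_eq_left, min_eq_right, h1, h2]
  · linarith
  · nlinarith [key a a' b b' h1 h2]
  · nlinarith [key a' a b' b h1 h2]
  · linarith

lemma alg_lt (a a' b b' τ : ℝ) {K K' : ℝ≥0∞} (hK : K ≠ ⊤) (h : K' < K)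
    (ha : a < τ) (ha' : τ < a') (hb : b' < τ) (hb' : τ < b) :
    (ENNReal.ofReal |max a a' - max b b'| + ENNReal.ofReal |min a a' - min b b'|) * K +
      (ENNReal.ofReal |max a a' - min b b'| + ENNReal.ofReal |min a a' - max b b'|) * K' <
    (ENNReal.ofReal |a - b| + ENNReal.ofReal |a' - b'|) * K +
      (ENNReal.ofReal |a - b'| + ENNReal.ofReal |a' - b|) * K' := by
  have hK' : K' ≠ ⊤ := ne_top_of_le_ne_top hK h.le
  lift K to NNReal using hK
  lift K' to NNReal using hK'
  have h : (K' : ℝ) < K := by exact_mod_cast h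
  have h0 : (0 : ℝ) ≤ K' := K'.2
  rw [← ENNReal.ofReal_coe_nnreal, ← ENNReal.ofReal_coe_nnreal]
  simp only [← ENNReal.ofReal_add (abs_nonneg _) (abs_nonneg _)]
  rw [← ENNReal.ofReal_mul (by positivity), ← ENNReal.ofReal_mul (by positivity),
    ← ENNReal.ofReal_mul (by positivity), ← ENNReal.ofReal_mul (by positivity),
    ← ENNReal.ofReal_add (by positivity) (by positivity),
    ← ENNReal.ofReal_add (by positivity) (by positivity)]
  have key : |a - b'| + |a' - b| < |a - b| + |a' - b'| := by
    rcases abs_cases (a - b') with h3 | h3 <;> rcases abs_cases (a' - b) with h4 | h4 <;>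
    rcases abs_cases (a - b) with h5 | h5 <;> rcases abs_cases (a' - b') with h6 | h6 <;> linarith
  have h1 : a ≤ a' := by linarith
  have h2 : b' ≤ b := by linarith
  have key2 : (|a' - b| + |a - b'|) * (K : ℝ) + (|a' - b'| + |a - b|) * K' <
      (|a - b| + |a' - b'|) * K + (|a - b'| + |a' - b|) * K' := by nlinarith
  simp only [max_eq_left, max_eq_right, min_eq_left, min_eq_right, h1, h2]
  refine (ENNReal.ofReal_lt_ofReal_iff_of_nonneg (by positivity)).2 key2

/-- symmetrised integrand -/
noncomputable def GG {m : ℕ} (β c : ℝ) (w : Xm m → ℝ) (p : Xm m × Xm m) : ℝ≥0∞ :=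
  (ENNReal.ofReal |w p.1 - w p.2| + ENNReal.ofReal |w (rf c p.1) - w (rf c p.2)|) * gK β p.1 p.2 +
  (ENNReal.ofReal |w p.1 - w (rf c p.2)| + ENNReal.ofReal |w (rf c p.1) - w p.2|) *
    gK β p.1 (rf c p.2)

lemma gK_rf_rf {m : ℕ} (β c : ℝ) (x y : Xm m) : gK β (rf c x) (rf c y) = gK β x y := by
  simp only [gK, rf]
  rw [← KK_neg]; congr 1; ring

lemma gK_rf_left {m : ℕ} (β c : ℝ) (x y : Xm m) : gK β (rf c x) y = gK β x (rf c y) := by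
  conv_lhs => rw [← rf_rf c y]
  rw [gK_rf_rf]

lemma gK_shift_left {m : ℕ} (β : ℝ) (x y : Xm m) :
    gK β ((x.1 + 2 * π, x.2) : Xm m) y = gK β x y := by
  simp only [gK]
  rw [show x.1 + 2 * π - y.1 = x.1 - y.1 + 2 * π by ring, KK_add]

lemma gK_shift_right {m : ℕ} (β : ℝ) (x y : Xm m) :
    gK β x ((y.1 + 2 * π, y.2) : Xm m) = gK β x y := by
  simp only [gK]
  rw [← KK_add, show x.1 - (y.1 + 2 * π) + 2 * π = x.1 - y.1 by ring]

lemma meas_F {m : ℕ} (β : ℝ) {w : Xm m → ℝ} (hw : Measurable w) :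
    Measurable fun p : Xm m × Xm m => ENNReal.ofReal |w p.1 - w p.2| * gK β p.1 p.2 := by
  have h1 : Measurable fun p : Xm m × Xm m => ENNReal.ofReal |w p.1 - w p.2| := by
    fun_prop
  exact h1.mul (measurable_gK _)

lemma measurable_GG {m : ℕ} (β c : ℝ) {w : Xm m → ℝ} (hw : Measurable w) :
    Measurable (GG β c w) := by
  have hr := (continuous_rf (m := m) c).measurable
  have h1 : Measurable fun p : Xm m × Xm m => gK β p.1 p.2 := measurable_gK _
  have h2 : Measurable fun p : Xm m × Xm m => gK β p.1 (rf c p.2) :=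
    h1.comp (f := fun p : Xm m × Xm m => (p.1, rf c p.2)) (by fun_prop)
  unfold GG
  fun_prop

lemma lint_GG {m : ℕ} (β c : ℝ) {w : Xm m → ℝ} (hw : Measurable w) (hp : Per w) :
    ∫⁻ p, GG β c w p ∂((SM m).prod (SM m)) =
      4 * ∫⁻ p, ENNReal.ofReal |w p.1 - w p.2| * gK β p.1 p.2 ∂((SM m).prod (SM m)) := by
  have hr := (continuous_rf (m := m) c).measurable
  set f : Xm m × Xm m → ℝ≥0∞ := fun p => ENNReal.ofReal |w p.1 - w p.2| * gK β p.1 p.2 with hf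
  have hfm : Measurable f := meas_F β hw
  have m1 : Measurable fun p : Xm m × Xm m => f (p.1, rf c p.2) := hfm.comp (by fun_prop)
  have m2 : Measurable fun p : Xm m × Xm m => f (rf c p.1, p.2) := hfm.comp (by fun_prop)
  have m3 : Measurable fun p : Xm m × Xm m => f (rf c p.1, rf c p.2) := hfm.comp (by fun_prop)
  have pl : ∀ y, Per fun x => f (x, y) := by
    intro y x; simp only [hf, gK_shift_left]; rw [hp x]
  have pr : ∀ x, Per fun y => f (x, y) := by
    intro y x; simp only [hf, gK_shift_right]; rw [hp x]
  have e1 : ∫⁻ p, f (p.1, rf c p.2) ∂((SM m).prod (SM m)) = ∫⁻ p, f p ∂((SM m).prod (SM m)) := by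
    rw [lintegral_prod _ m1.aemeasurable, lintegral_prod _ hfm.aemeasurable]
    refine lintegral_congr fun x => ?_
    exact lint_rf (G := fun y => f (x, y)) (by fun_prop) (pr x) c
  have e2 : ∫⁻ p, f (rf c p.1, p.2) ∂((SM m).prod (SM m)) = ∫⁻ p, f p ∂((SM m).prod (SM m)) := by
    rw [lintegral_prod_symm _ m2.aemeasurable, lintegral_prod_symm _ hfm.aemeasurable]
    refine lintegral_congr fun y => ?_
    exact lint_rf (G := fun x => f (x, y)) (by fun_prop) (pl y) c
  have e3 : ∫⁻ p, f (rf c p.1, rf c p.2) ∂((SM m).prod (SM m)) =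
      ∫⁻ p, f p ∂((SM m).prod (SM m)) := by
    rw [← e1, lintegral_prod_symm _ m3.aemeasurable, lintegral_prod_symm _ m1.aemeasurable]
    refine lintegral_congr fun y => ?_
    exact lint_rf (G := fun x => f (x, rf c y)) (by fun_prop) (pl _) c
  have : ∀ p, GG β c w p = ((f p + f (p.1, rf c p.2)) + f (rf c p.1, p.2)) +
      f (rf c p.1, rf c p.2) := by
    intro p
    simp only [GG, hf, gK_rf_left, rf_rf]
    ring
  simp_rw [this]
  rw [lintegral_add_right _ m3, lintegral_add_right _ m2, lintegral_add_right _ m1, e1, e2, e3]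
  ring

end Stmt9

namespace Stmt9
open Filter Topology

/-! ### Part 5: polarization inequality -/

lemma closed_or {X : Type*} [TopologicalSpace X] {p q : X → Prop} (hp : IsClosed {x | p x})
    (hq : IsClosed {x | q x}) : IsClosed {x | p x ∨ q x} := hp.union hq

lemma ae_closed_all {m : ℕ} {P : Xm m → Prop} (hc : IsClosed {x | P x}) (hp : Per P)
    (h : ∀ᵐ x ∂(SM m), P x) : ∀ x, P x := by
  set U : Set (Xm m) := {x | ¬ P x} with hU
  have hUo : IsOpen U := by
    have : U = {x | P x}ᶜ := by ext; simp [hU]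
    rw [this]; exact hc.isOpen_compl
  have hz : volume U = 0 := by
    rw [← lintegral_indicator_one hUo.measurableSet,
      lint_fold_X (measurable_one.indicator hUo.measurableSet)]
    have : (fun x : Xm m => ∑' n : ℤ, U.indicator (1 : Xm m → ℝ≥0∞) (x.1 - 2 * π * n, x.2))
        =ᵐ[SM m] fun _ => 0 := by
      filter_upwards [h] with x hx
      refine ENNReal.tsum_eq_zero.2 fun n => ?_
      have h2 := hp.shift_int (-n) x
      rw [show x.1 + 2 * π * ((-n : ℤ) : ℝ) = x.1 - 2 * π * n by push_cast; ring] at h2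
      have : (x.1 - 2 * π * (n : ℝ), x.2) ∉ U := by
        simp only [hU, Set.mem_setOf_eq, not_not]; rw [h2]; exact hx
      simp [this]
    rw [lintegral_congr_ae this]; simp
  have := (hUo.measure_eq_zero_iff volume).1 hz
  intro x
  by_contra hx
  have hx2 : x ∈ U := hx
  rw [this] at hx2
  exact hx2

lemma countable_sin (c : ℝ) : {t : ℝ | Real.sin (t - c) = 0}.Countable := by
  have : {t : ℝ | Real.sin (t - c) = 0} ⊆ Set.range fun n : ℤ => (n : ℝ) * π + c := by
    intro t ht
    obtain ⟨n, hn⟩ := Real.sin_eq_zero_iff.1 ht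
    exact ⟨n, by simp only; linarith⟩
  exact (Set.countable_range _).mono this

lemma ae_sin (m : ℕ) (c : ℝ) : ∀ᵐ x ∂(SM m), Real.sin (x.1 - c) ≠ 0 := by
  rw [ae_iff]
  have : {a : Xm m | ¬ Real.sin (a.1 - c) ≠ 0} = {t : ℝ | Real.sin (t - c) = 0} ×ˢ Set.univ := by
    ext; simp
  rw [this, SM, Measure.prod_prod]
  rw [(countable_sin c).measure_zero]; simp

lemma cos_ne_of_sin {t : ℝ} (h : Real.sin t ≠ 0) : Real.cos t ≠ 1 := by
  intro h2
  have := Real.sin_sq_add_cos_sq t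
  rw [h2] at this
  apply h
  nlinarith

lemma ae_good (m : ℕ) (c : ℝ) : ∀ᵐ p ∂((SM m).prod (SM m)), Real.sin (p.1.1 - c) ≠ 0 ∧
    Real.sin (p.2.1 - c) ≠ 0 ∧ Real.sin (p.2.1 - p.1.1) ≠ 0 ∧
      Real.sin (p.2.1 - (2 * c - p.1.1)) ≠ 0 := by
  have hm : MeasurableSet {p : Xm m × Xm m | Real.sin (p.1.1 - c) ≠ 0 ∧
    Real.sin (p.2.1 - c) ≠ 0 ∧ Real.sin (p.2.1 - p.1.1) ≠ 0 ∧
      Real.sin (p.2.1 - (2 * c - p.1.1)) ≠ 0} := by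
    refine IsOpen.measurableSet ?_
    refine IsOpen.inter (isOpen_ne_fun (by fun_prop) (by fun_prop)) ?_
    refine IsOpen.inter (isOpen_ne_fun (by fun_prop) (by fun_prop)) ?_
    exact IsOpen.inter (isOpen_ne_fun (by fun_prop) (by fun_prop))
      (isOpen_ne_fun (by fun_prop) (by fun_prop))
  refine (Measure.ae_prod_mem_iff_ae_ae_mem hm).2 ?_
  filter_upwards [ae_sin m c] with x hx
  filter_upwards [ae_sin m c, ae_sin m x.1, ae_sin m (2 * c - x.1)] with y h1 h2 h3
  exact ⟨hx, h1, h2, h3⟩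

lemma cos_diff {m : ℕ} (c : ℝ) (x y : Xm m) : Real.cos (x.1 - y.1) - Real.cos (x.1 - (rf c y).1) =
    2 * Real.sin (x.1 - c) * Real.sin (y.1 - c) := by
  simp only [rf]
  rw [show x.1 - y.1 = (x.1 - c) - (y.1 - c) by ring,
    show x.1 - (2 * c - y.1) = (x.1 - c) + (y.1 - c) by ring, Real.cos_sub, Real.cos_add]
  ring

lemma gK_lt {m : ℕ} {β c : ℝ} (hβ : 1 < β) {x y : Xm m}
    (h : 0 < Real.sin (x.1 - c) * Real.sin (y.1 - c)) (h3 : Real.sin (y.1 - x.1) ≠ 0) :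
    gK β x (rf c y) < gK β x y := by
  refine KK_strict hβ ?_ (Or.inr ?_)
  · have := cos_diff c x y; nlinarith
  · rw [← Real.cos_neg, neg_sub]; exact cos_ne_of_sin h3

lemma gK_lt' {m : ℕ} {β c : ℝ} (hβ : 1 < β) {x y : Xm m}
    (h : Real.sin (x.1 - c) * Real.sin (y.1 - c) < 0)
    (h3 : Real.sin (y.1 - (2 * c - x.1)) ≠ 0) :
    gK β x y < gK β x (rf c y) := by
  refine KK_strict hβ ?_ (Or.inr ?_)
  · have := cos_diff c x y; simp only [rf] at this ⊢; nlinarith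
  · simp only [rf]
    rw [show x.1 - (2 * c - y.1) = y.1 - (2 * c - x.1) by ring]; exact cos_ne_of_sin h3

lemma gK_top {m : ℕ} {β : ℝ} (hβ : 1 < β) {x y : Xm m} (h3 : Real.sin (y.1 - x.1) ≠ 0) :
    gK β x y ≠ ⊤ := by
  refine (KK_lt_top hβ _ ?_).ne
  rw [← Real.cos_neg, neg_sub]; exact cos_ne_of_sin h3

lemma gK_top' {m : ℕ} {β c : ℝ} (hβ : 1 < β) {x y : Xm m}
    (h3 : Real.sin (y.1 - (2 * c - x.1)) ≠ 0) : gK β x (rf c y) ≠ ⊤ := by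
  refine (KK_lt_top hβ _ ?_).ne
  simp only [rf]
  rw [show x.1 - (2 * c - y.1) = y.1 - (2 * c - x.1) by ring]; exact cos_ne_of_sin h3

lemma GG_pol_le {m : ℕ} {β c : ℝ} (hβ : 1 < β) (w : Xm m → ℝ) (p : Xm m × Xm m)
    (h1 : Real.sin (p.1.1 - c) ≠ 0) (h2 : Real.sin (p.2.1 - c) ≠ 0)
    (h3 : Real.sin (p.2.1 - p.1.1) ≠ 0) (h4 : Real.sin (p.2.1 - (2 * c - p.1.1)) ≠ 0) :
    GG β c (pol c w) p ≤ GG β c w p := by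
  obtain ⟨x, y⟩ := p
  simp only at h1 h2 h3 h4
  have t1 := gK_top (m := m) hβ h3
  have t2 := gK_top' (m := m) hβ h4
  simp only [GG]
  rcases lt_or_gt_of_ne h1 with h1 | h1 <;> rcases lt_or_gt_of_ne h2 with h2 | h2
  · have hk := gK_lt (m := m) (c := c) hβ (by nlinarith) h3
    rw [(pol_neg h1).1, (pol_neg h1).2, (pol_neg h2).1, (pol_neg h2).2]
    have := alg_le (w x) (w (rf c x)) (w y) (w (rf c y)) t1 hk.le
    refine le_of_eq_of_le ?_ this
    ring
  · have hk := gK_lt' (m := m) (c := c) hβ (by nlinarith) h4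
    rw [(pol_neg h1).1, (pol_neg h1).2, (pol_pos h2).1, (pol_pos h2).2]
    have := alg_le (w x) (w (rf c x)) (w (rf c y)) (w y) t2 hk.le
    rw [add_comm, add_comm (_ * gK β x y)]
    rw [max_comm (w (rf c y)), min_comm (w (rf c y))] at this
    refine le_of_eq_of_le ?_ this
    ring
  · have hk := gK_lt' (m := m) (c := c) hβ (by nlinarith) h4
    rw [(pol_pos h1).1, (pol_pos h1).2, (pol_neg h2).1, (pol_neg h2).2]
    have := alg_le (w x) (w (rf c x)) (w (rf c y)) (w y) t2 hk.le
    rw [add_comm, add_comm (_ * gK β x y)]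
    rw [max_comm (w (rf c y)), min_comm (w (rf c y))] at this
    exact this
  · have hk := gK_lt (m := m) (c := c) hβ (by nlinarith) h3
    rw [(pol_pos h1).1, (pol_pos h1).2, (pol_pos h2).1, (pol_pos h2).2]
    exact alg_le (w x) (w (rf c x)) (w y) (w (rf c y)) t1 hk.le

lemma beta_gt (m : ℕ) {s : ℝ} (hs : 0 < s) : 1 < (m : ℝ) + 1 + s := by
  have : (0 : ℝ) ≤ m := Nat.cast_nonneg m
  linarith

lemma GG_ae_le (m : ℕ) {β : ℝ} (hβ : 1 < β) (c : ℝ) (w : Xm m → ℝ) :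
    ∀ᵐ p ∂((SM m).prod (SM m)), GG β c (pol c w) p ≤ GG β c w p := by
  filter_upwards [ae_good m c] with p hp
  exact GG_pol_le hβ w p hp.1 hp.2.1 hp.2.2.1 hp.2.2.2

lemma four_gagP (m : ℕ) {s : ℝ} (hs : 0 < s) (c : ℝ) {w : Xm m → ℝ} (hw : Measurable w)
    (hp : Per w) :
    4 * gagP m s 1 w = ∫⁻ p, GG ((m : ℝ) + 1 + s) c w p ∂((SM m).prod (SM m)) := by
  rw [lint_GG _ _ hw hp, gagP_fold m s hs w hw hp]

lemma gagP_pol_le (m : ℕ) {s : ℝ} (hs : 0 < s) (c : ℝ) {w : Xm m → ℝ} (hw : Measurable w)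
    (hp : Per w) : gagP m s 1 (pol c w) ≤ gagP m s 1 w := by
  have h : 4 * gagP m s 1 (pol c w) ≤ 4 * gagP m s 1 w := by
    rw [four_gagP m hs c (measurable_pol hw c) (hp.pol c), four_gagP m hs c hw hp]
    exact lintegral_mono_ae (GG_ae_le m (beta_gt m hs) c w)
  exact (ENNReal.mul_le_mul_iff_right (by norm_num) (by norm_num)).1 h

lemma pol_eq_case {m : ℕ} {s : ℝ} (hs : 0 < s) (c : ℝ) {w : Xm m → ℝ} (hw : Continuous w)
    (hp : Per w) (hfin : gagP m s 1 w ≠ ⊤) (hle : gagP m s 1 w ≤ gagP m s 1 (pol c w))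
    (x y : Xm m) (hx : 0 < Real.sin (x.1 - c)) (hy : 0 < Real.sin (y.1 - c)) (τ : ℝ) :
    ¬ (w x ≤ τ ∧ τ < w (rf c x) ∧ w (rf c y) ≤ τ ∧ τ < w y) := by
  rintro ⟨a1, a2, b1, b2⟩
  obtain ⟨τ', t1, t2⟩ := exists_between (lt_min a2 b2)
  have hβ := beta_gt m hs
  set β := (m : ℝ) + 1 + s
  have hae : GG β c (pol c w) =ᵐ[(SM m).prod (SM m)] GG β c w := by
    refine ae_eq_of_ae_le_of_lintegral_le (GG_ae_le m hβ c w) ?_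
      (measurable_GG β c hw.measurable).aemeasurable ?_
    · rw [← four_gagP m hs c (measurable_pol hw.measurable c) (hp.pol c)]
      refine ENNReal.mul_ne_top (by norm_num) ?_
      exact ne_top_of_le_ne_top hfin (gagP_pol_le m hs c hw.measurable hp)
    · rw [← four_gagP m hs c (measurable_pol hw.measurable c) (hp.pol c),
        ← four_gagP m hs c hw.measurable hp]
      gcongr
  have hr := continuous_rf (m := m) c
  have hae2 : ∀ᵐ p ∂((SM m).prod (SM m)), (Real.sin (p.1.1 - c) ≤ 0 ∨ τ' ≤ w p.1 ∨
      w (rf c p.1) ≤ τ') ∨ (Real.sin (p.2.1 - c) ≤ 0 ∨ τ' ≤ w (rf c p.2) ∨ w p.2 ≤ τ') := by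
    filter_upwards [hae, ae_good m c] with p h1 h2
    by_contra! hcon
    obtain ⟨⟨c1, c2, c3⟩, c4, c5, c6⟩ := hcon
    refine ne_of_lt ?_ h1
    have hk := gK_lt (m := m) (c := c) hβ (x := p.1) (y := p.2) (by nlinarith) h2.2.2.1
    have := alg_lt (w p.1) (w (rf c p.1)) (w p.2) (w (rf c p.2)) τ'
      (gK_top (m := m) hβ h2.2.2.1) hk c2 c3 c5 c6
    simp only [GG]
    rw [(pol_pos c1).1, (pol_pos c1).2, (pol_pos c4).1, (pol_pos c4).2]
    exact this
  have hsh : ∀ z : Xm m, Real.sin (z.1 + 2 * π - c) = Real.sin (z.1 - c) := by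
    intro z; rw [show z.1 + 2 * π - c = z.1 - c + 2 * π by ring, Real.sin_add_two_pi]
  have h3 := Measure.ae_ae_of_ae_prod hae2
  have h4 : ∀ᵐ x ∂(SM m), ∀ y : Xm m, (Real.sin (x.1 - c) ≤ 0 ∨ τ' ≤ w x ∨
      w (rf c x) ≤ τ') ∨ (Real.sin (y.1 - c) ≤ 0 ∨ τ' ≤ w (rf c y) ∨ w y ≤ τ') := by
    filter_upwards [h3] with x hx
    refine ae_closed_all ?_ ?_ hx
    · refine closed_or isClosed_const ?_
      refine closed_or (isClosed_le (by fun_prop) (by fun_prop)) ?_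
      exact closed_or (isClosed_le (by fun_prop) (by fun_prop))
        (isClosed_le (by fun_prop) (by fun_prop))
    · intro z
      have e1 := hp z
      have e2 := hp.rf c z
      simp only at e2
      simp only [hsh, e1, e2]
  have h5 : ∀ x : Xm m, (Real.sin (x.1 - c) ≤ 0 ∨ τ' ≤ w x ∨
      w (rf c x) ≤ τ') ∨ (Real.sin (y.1 - c) ≤ 0 ∨ τ' ≤ w (rf c y) ∨ w y ≤ τ') := by
    refine ae_closed_all ?_ ?_ (h4.mono fun x hx => hx y)
    · refine closed_or ?_ isClosed_const
      refine closed_or (isClosed_le (by fun_prop) (by fun_prop)) ?_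
      exact closed_or (isClosed_le (by fun_prop) (by fun_prop))
        (isClosed_le (by fun_prop) (by fun_prop))
    · intro z
      have e1 := hp z
      have e2 := hp.rf c z
      simp only at e2
      simp only [hsh, e1, e2]
  have := lt_min_iff.1 t2
  rcases h5 x with (h | h | h) | (h | h | h) <;> linarith

end Stmt9

namespace Stmt9
open Filter Topology

/-! ### Part 6: computing rearrangements -/

/-- representative in the fundamental domain -/
noncomputable def fo (x : ℝ) : ℝ := x - 2 * π * (⌊(x + π) / (2 * π)⌋ : ℝ)

/-- slice measure in the fundamental domain -/
noncomputable def slm (S : Set ℝ) : ℝ≥0∞ := volume {y : ℝ | y ∈ Set.Ioo (-π) π ∧ y ∈ S}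

lemma slm_lt_top (S : Set ℝ) : slm S < ⊤ :=
  lt_of_le_of_lt (measure_mono fun _ hy => hy.1) measure_Ioo_lt_top

lemma fo_mem (x : ℝ) : fo x ∈ Set.Ico (-π) π := by
  have hp := Real.pi_pos
  have h1 := Int.floor_le ((x + π) / (2 * π))
  have h2 := Int.lt_floor_add_one ((x + π) / (2 * π))
  rw [le_div_iff₀ (by positivity)] at h1
  rw [div_lt_iff₀ (by positivity)] at h2
  constructor <;> unfold fo <;> nlinarith

lemma cos_fo (x : ℝ) : Real.cos (fo x) = Real.cos x := by
  unfold fo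
  rw [mul_comm]
  exact Real.cos_sub_int_mul_two_pi x _

lemma fo_mem_Ioo {x : ℝ} (h : Real.cos x ≠ -1) : fo x ∈ Set.Ioo (-π) π := by
  refine ⟨lt_of_le_of_ne (fo_mem x).1 ?_, (fo_mem x).2⟩
  intro h2
  apply h
  rw [← cos_fo, ← h2]; simp

lemma symmdec_iff {S : Set ℝ} (hS : IsOpen S) (h : ∀ a b, Real.cos b < Real.cos a → b ∈ S → a ∈ S)
    {y : ℝ} (hy : y ∈ Set.Ioo (-π) π) : y ∈ S ↔ |y| < (slm S).toReal / 2 := by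
  have hcos : ∀ a b : ℝ, |a| < |b| → |b| ≤ π → Real.cos b < Real.cos a := by
    intro a b h1 h2
    rw [← Real.cos_abs a, ← Real.cos_abs b]
    exact Real.cos_lt_cos_of_nonneg_of_le_pi (abs_nonneg _) h2 h1
  have habs : ∀ z : ℝ, z ∈ Set.Ioo (-π) π ↔ |z| < π := fun z => by rw [abs_lt]; rfl
  have hfin := (slm_lt_top S).ne
  constructor
  · intro hyS
    obtain ⟨ε, he, hb⟩ := Metric.isOpen_iff.1 (hS.inter isOpen_Ioo) y ⟨hyS, hy⟩
    obtain ⟨y', hy', hlt⟩ : ∃ y' ∈ S ∩ Set.Ioo (-π) π, |y| < |y'| := by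
      rcases le_or_gt 0 y with h0 | h0
      · refine ⟨y + ε / 2, hb ?_, ?_⟩
        · rw [Metric.mem_ball, Real.dist_eq]; simp [abs_of_pos (half_pos he)]; linarith
        · rw [abs_of_nonneg h0, abs_of_nonneg (by linarith)]; linarith
      · refine ⟨y - ε / 2, hb ?_, ?_⟩
        · rw [Metric.mem_ball, Real.dist_eq]; simp [abs_of_pos (half_pos he)]; linarith
        · rw [abs_of_neg h0, abs_of_neg (by linarith)]; linarith
    have hpi' := (habs _).1 hy'.2
    have hsub : Set.Ioo (-|y'|) |y'| ⊆ {z : ℝ | z ∈ Set.Ioo (-π) π ∧ z ∈ S} := by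
      intro z hz
      have hz' : |z| < |y'| := abs_lt.2 hz
      exact ⟨(habs z).2 (hz'.trans hpi'), h z y' (hcos _ _ hz' hpi'.le) hy'.1⟩
    have := measure_mono (μ := volume) hsub
    rw [Real.volume_Ioo] at this
    have h3 := (ENNReal.ofReal_le_iff_le_toReal hfin).1 this
    linarith
  · intro hlt
    by_contra hyS
    have hsub : {z : ℝ | z ∈ Set.Ioo (-π) π ∧ z ∈ S} ⊆ Set.Icc (-|y|) |y| := by
      intro z hz
      by_contra hcon
      have : |y| < |z| := by
        by_contra h4
        exact hcon (abs_le.1 (not_lt.1 h4))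
      exact hyS (h y z (hcos _ _ this ((habs z).1 hz.1).le) hz.2)
    have := measure_mono (μ := volume) hsub
    rw [Real.volume_Icc] at this
    have h3 := ENNReal.toReal_le_of_le_ofReal (by linarith [abs_nonneg y]) this
    unfold slm at hlt
    linarith

lemma per_fo {α : Type*} {g : ℝ → α} (hg : ∀ x, g (x + 2 * π) = g x) (x : ℝ) :
    g (fo x) = g x := by
  have hp : Function.Periodic g (2 * π) := hg
  have := hp.sub_zsmul_eq (x := x) ⌊(x + π) / (2 * π)⌋
  rw [← this]; unfold fo; congr 1; simp; ring

lemma perRearr_eq {f g : ℝ → ℝ} (hg : Continuous g) (hper : ∀ x, g (x + 2 * π) = g x)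
    (h0 : ∀ x, 0 ≤ g x) (hdec : ∀ a b, Real.cos b < Real.cos a → g b ≤ g a)
    (heq : ∀ t, 0 < t → slm {y | t < f y} = slm {y | t < g y}) {x : ℝ} (hx : Real.cos x ≠ -1) :
    perRearr f x = g x := by
  have hz := fo_mem_Ioo hx
  rw [← per_fo hper]
  change symmRearr f (fo x) = g (fo x)
  set z := fo x
  unfold symmRearr
  have : ∀ t ∈ Set.Ioi (0 : ℝ), (symmSet {y | y ∈ Set.Ioo (-π) π ∧ t < f y}).indicator
      (fun _ => (1 : ℝ)) z = (Set.Iio (g z)).indicator (fun _ => (1 : ℝ)) t := by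
    intro t ht
    have h1 := symmdec_iff (S := {y | t < g y}) (isOpen_lt continuous_const hg)
      (fun a b hab hb => lt_of_lt_of_le hb (hdec a b hab)) hz
    rw [← heq t ht, abs_lt] at h1
    have h2 : z ∈ symmSet {y | y ∈ Set.Ioo (-π) π ∧ t < f y} ↔ t ∈ Set.Iio (g z) := h1.symm
    by_cases h3 : t ∈ Set.Iio (g z)
    · rw [Set.indicator_of_mem h3, Set.indicator_of_mem (h2.2 h3)]
    · rw [Set.indicator_of_notMem h3, Set.indicator_of_notMem (fun h => h3 (h2.1 h))]
  rw [setIntegral_congr_fun measurableSet_Ioi this, setIntegral_indicator measurableSet_Iio,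
    Set.Ioi_inter_Iio]
  simp [h0]

lemma mem_perRearrSet {m : ℕ} {A : Set (Xm m)} {x : Xm m} :
    x ∈ perRearrSet m A ↔ |fo x.1| < (slm {y | (y, x.2) ∈ A}).toReal / 2 := by
  change 0 < symmRearr _ (fo x.1) ↔ _
  set z := fo x.1
  unfold symmRearr
  have : ∀ t ∈ Set.Ioi (0 : ℝ), (symmSet {y | y ∈ Set.Ioo (-π) π ∧
      t < |A.indicator (fun _ => (1 : ℝ)) (y, x.2)|}).indicator
      (fun _ => (1 : ℝ)) z = (Set.Iio (1 : ℝ)).indicator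
        (fun _ => if |z| < (slm {y | (y, x.2) ∈ A}).toReal / 2 then (1 : ℝ) else 0) t := by
    intro t ht
    have ht : 0 < t := ht
    by_cases h1 : t < 1
    · rw [Set.indicator_of_mem (show t ∈ Set.Iio 1 from h1)]
      have : {y : ℝ | y ∈ Set.Ioo (-π) π ∧ t < |A.indicator (fun _ => (1 : ℝ)) (y, x.2)|} =
          {y | y ∈ Set.Ioo (-π) π ∧ y ∈ {y | (y, x.2) ∈ A}} := by
        ext y
        by_cases hy : (y, x.2) ∈ A
        · simp [hy, h1]
        · simp [hy, ht.le]
      rw [this]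
      unfold symmSet
      simp only [Set.indicator_apply, Set.mem_Ioo, ← abs_lt, slm]
    · rw [Set.indicator_of_notMem (show t ∉ Set.Iio 1 from h1)]
      have : {y : ℝ | y ∈ Set.Ioo (-π) π ∧ t < |A.indicator (fun _ => (1 : ℝ)) (y, x.2)|} = ∅ := by
        ext y
        by_cases hy : (y, x.2) ∈ A
        · simp [hy]; intros; linarith
        · simp [hy, ht.le]
      rw [this]
      simp [symmSet]
  rw [setIntegral_congr_fun measurableSet_Ioi this, setIntegral_indicator measurableSet_Iio,
    Set.Ioi_inter_Iio]
  by_cases h : |z| < (slm {y | (y, x.2) ∈ A}).toReal / 2 <;> simp [h]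

end Stmt9

namespace Stmt9
open Filter Topology

/-! ### Part 7: the compact class of competitors -/

/-- the pointwise closed part of the class of competitors -/
structure C0 {m : ℕ} (v w : Xm m → ℝ) : Prop where
  per : Per w
  nonneg : ∀ x, 0 ≤ w x
  bdd : ∀ (x' : Em m) (r : ℝ), (∀ a, v (a, x') ≤ r) → ∀ a, w (a, x') ≤ r
  modu : ∀ (x' y' : Em m) (r κ : ℝ), (∀ a b, κ ≤ Real.cos (a - b) → v (a, x') ≤ v (b, y') + r) →
    ∀ a b, κ ≤ Real.cos (a - b) → w (a, x') ≤ w (b, y') + r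

def Equi {m : ℕ} (v w : Xm m → ℝ) : Prop := ∀ (x' : Em m) (φ : ℝ → ℝ≥0∞), Measurable φ →
  ∫⁻ a in Set.Ioo (-π) π, φ (w (a, x')) = ∫⁻ a in Set.Ioo (-π) π, φ (v (a, x'))

lemma C0.refl {m : ℕ} {v : Xm m → ℝ} (hp : Per v) (h0 : ∀ x, 0 ≤ v x) : C0 v v :=
  ⟨hp, h0, fun _ _ h => h, fun _ _ _ _ h => h⟩

lemma C0.pol {m : ℕ} {v w : Xm m → ℝ} (h : C0 v w) (c : ℝ) : C0 v (pol c w) := by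
  refine ⟨h.per.pol c, ?_, ?_, ?_⟩
  · intro x
    have h1 := h.nonneg x
    have h2 := h.nonneg (rf c x)
    unfold Stmt9.pol
    split_ifs <;> simp [h1, h2]
  · intro x' r hr a
    have h1 := h.bdd x' r hr
    have h2 := h1 a
    have h3 := h1 (2 * c - a)
    unfold Stmt9.pol
    split_ifs <;> simp [rf, h2, h3]
  · intro x' y' r κ hr a b hab
    have h1 := h.modu x' y' r κ hr
    have h2 := h1 a b hab
    have h3 := h1 (2 * c - a) (2 * c - b) (by
      rw [show 2 * c - a - (2 * c - b) = -(a - b) by ring, Real.cos_neg]; exact hab)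
    have hd := cos_diff c ((a, x') : Xm m) ((b, y') : Xm m)
    simp only [rf] at hd
    unfold Stmt9.pol
    simp only [rf]
    split_ifs with ha hb hb
    · exact max_le (h2.trans (by gcongr; exact le_max_left _ _))
        (h3.trans (by gcongr; exact le_max_right _ _))
    · have hc : Real.cos (a - b) ≤ Real.cos (a - (2 * c - b)) := by nlinarith
      have h4 := h1 a (2 * c - b) (hab.trans hc)
      have h5 := h1 (2 * c - a) b (by
        rw [show 2 * c - a - b = -(a - (2 * c - b)) by ring, Real.cos_neg]; exact hab.trans hc)
      rw [← sub_le_iff_le_add]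
      refine le_min ?_ ?_
      · rw [sub_le_iff_le_add]; exact max_le h2 h5
      · rw [sub_le_iff_le_add]; exact max_le h4 h3
    · exact (min_le_left _ _).trans (h2.trans (by gcongr; exact le_max_left _ _))
    · rw [← sub_le_iff_le_add]
      refine le_min ?_ ?_
      · rw [sub_le_iff_le_add]; exact (min_le_left _ _).trans h2
      · rw [sub_le_iff_le_add]; exact (min_le_right _ _).trans h3

lemma pol_pair {m : ℕ} {w : Xm m → ℝ} (hp : Per w) (c : ℝ) {α : Type*} [AddCommMonoid α]
    (φ : ℝ → α) (x : Xm m) :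
    φ (pol c w x) + φ (pol c w (rf c x)) = φ (w x) + φ (w (rf c x)) := by
  rcases lt_trichotomy (Real.sin (x.1 - c)) 0 with h | h | h
  · rw [(pol_neg h).1, (pol_neg h).2]
    rcases le_total (w x) (w (rf c x)) with h1 | h1 <;> simp [h1, add_comm]
  · have e : pol c w (rf c x) = pol c w x := (hp.pol c).rf_fix h
    have e2 : w (rf c x) = w x := hp.rf_fix h
    have e3 : pol c w x = w x := by unfold pol; rw [e2]; simp
    rw [e, e2, e3]
  · rw [(pol_pos h).1, (pol_pos h).2]
    rcases le_total (w x) (w (rf c x)) with h1 | h1 <;> simp [h1, add_comm]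

lemma Equi.pol {m : ℕ} {v w : Xm m → ℝ} (hw : Continuous w) (hp : Per w) (h : Equi v w) (c : ℝ) :
    Equi v (pol c w) := by
  intro x' φ hφ
  rw [← h x' φ hφ]
  have hpc := continuous_pol hw hp c
  have key : ∀ g : Xm m → ℝ, Continuous g → Per g →
      2 * ∫⁻ a in Set.Ioo (-π) π, φ (g (a, x')) =
      ∫⁻ a in Set.Ioo (-π) π, (φ (g (a, x')) + φ (g (rf c (a, x')))) := by
    intro g hg hgp
    rw [lintegral_add_left (by fun_prop), two_mul]
    congr 1
    exact (lint_per_reflect (g := fun a => φ (g (a, x')))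
      (fun a => by rw [hgp (a, x')]) c).symm
  have e : 2 * ∫⁻ a in Set.Ioo (-π) π, φ (Stmt9.pol c w (a, x')) =
      2 * ∫⁻ a in Set.Ioo (-π) π, φ (w (a, x')) := by
    rw [key _ hpc (hp.pol c), key _ hw hp]
    simp_rw [pol_pair hp c φ]
  exact (ENNReal.mul_right_inj (by norm_num) (by norm_num)).1 e

lemma Equi.slm {m : ℕ} {v w : Xm m → ℝ} (hv : Continuous v) (hw : Continuous w) (h : Equi v w)
    (x' : Em m) (t : ℝ) : slm {y | t < w (y, x')} = slm {y | t < v (y, x')} := by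
  have key : ∀ g : Xm m → ℝ, Continuous g → Stmt9.slm {y | t < g (y, x')} =
      ∫⁻ a in Set.Ioo (-π) π, (Set.Ioi t).indicator (1 : ℝ → ℝ≥0∞) (g (a, x')) := by
    intro g hg
    have hm : MeasurableSet {y : ℝ | t < g (y, x')} :=
      (isOpen_lt continuous_const (by fun_prop)).measurableSet
    have : (fun a => (Set.Ioi t).indicator (1 : ℝ → ℝ≥0∞) (g (a, x'))) =
        {y : ℝ | t < g (y, x')}.indicator 1 := by
      ext a; simp [Set.indicator]
    rw [this, lintegral_indicator_one hm, Measure.restrict_apply hm, Stmt9.slm]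
    congr 1; ext y; simp [and_comm]
  rw [key w hw, key v hv, h x' _ (measurable_one.indicator measurableSet_Ioi)]

/-- continuity modulus of a continuous periodic function near a slice -/
lemma exists_modulus {m : ℕ} {v : Xm m → ℝ} (hv : Continuous v) (hp : Per v) (x0 : Em m) {ε : ℝ}
    (he : 0 < ε) : ∃ δ > 0, ∃ κ < 1, ∀ x' : Em m, dist x' x0 < δ → ∀ a b,
      κ ≤ Real.cos (a - b) → |v (a, x') - v (b, x0)| ≤ ε := by
  have hpi := Real.pi_pos
  have hK : IsCompact (Set.Icc (-(2 * π)) (2 * π) ×ˢ Metric.closedBall x0 1) :=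
    isCompact_Icc.prod (isCompact_closedBall _ _)
  have huc := hK.uniformContinuousOn_of_continuous hv.continuousOn
  obtain ⟨δ, hδ, hd⟩ := Metric.uniformContinuousOn_iff.1 huc ε he
  set η := min (δ / 2) (π / 2) with hη
  have hη0 : 0 < η := lt_min (by linarith) (by linarith)
  have hηπ : η ≤ π := (min_le_right _ _).trans (by linarith)
  refine ⟨min δ 1, lt_min hδ one_pos, Real.cos η, ?_, ?_⟩
  · have := Real.cos_lt_cos_of_nonneg_of_le_pi le_rfl hηπ hη0
    simpa using this
  · intro x' hx' a b hab
    set θ := fo (b - a)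
    have hθ := fo_mem (b - a)
    have hθ2 : |θ| ≤ η := by
      by_contra hcon
      have h1 : |θ| ≤ π := abs_le.2 ⟨hθ.1, hθ.2.le⟩
      have := Real.cos_lt_cos_of_nonneg_of_le_pi hη0.le h1 (not_le.1 hcon)
      rw [Real.cos_abs, cos_fo, ← Real.cos_neg, neg_sub] at this
      linarith
    have ha := fo_mem a
    have e1 : v (a, x') = v (fo a, x') :=
      (per_fo (g := fun a => v (a, x')) (fun a => hp (a, x')) a).symm
    have e2 : v (b, x0) = v (fo a + θ, x0) := by
      have := hp.shift_int (-⌊(a + π) / (2 * π)⌋ - ⌊(b - a + π) / (2 * π)⌋) (b, x0)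
      rw [← this]; congr 2
      simp only [fo, θ]; push_cast; ring
    rw [e1, e2]
    have h1 := abs_le.1 hθ2
    have := hd (fo a, x') ⟨⟨by linarith [ha.1], by linarith [ha.2]⟩,
      Metric.mem_closedBall.2 (hx'.le.trans (min_le_right _ _))⟩
      (fo a + θ, x0) ⟨⟨by linarith [ha.1], by linarith [ha.2]⟩, by simp⟩ (by
        rw [Prod.dist_eq]
        refine max_lt ?_ (hx'.trans_le (min_le_left _ _))
        rw [Real.dist_eq]
        simp only [sub_add_cancel_left, abs_neg]
        exact lt_of_le_of_lt hθ2 (lt_of_le_of_lt (min_le_left _ _) (by linarith)))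
    rw [Real.dist_eq] at this
    exact this.le

lemma C0.modulus {m : ℕ} {v : Xm m → ℝ} (hv : Continuous v) (hp : Per v) (x : Xm m) {ε : ℝ}
    (he : 0 < ε) : ∀ᶠ y in 𝓝 x, ∀ w, C0 v w → |w x - w y| ≤ ε := by
  obtain ⟨δ, hδ, κ, hκ, hm⟩ := exists_modulus hv hp x.2 he
  have h1 : ∀ᶠ y : Xm m in 𝓝 x, dist y.2 x.2 < δ := by
    have : Continuous fun y : Xm m => dist y.2 x.2 := by fun_prop
    exact (this.tendsto x).eventually_lt_const (by simpa using hδ)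
  have h2 : ∀ᶠ y : Xm m in 𝓝 x, κ < Real.cos (y.1 - x.1) := by
    have : Continuous fun y : Xm m => Real.cos (y.1 - x.1) := by fun_prop
    exact (this.tendsto x).eventually_const_lt (by simpa using hκ)
  filter_upwards [h1, h2] with y hy1 hy2 w hw
  have a1 := hw.modu y.2 x.2 ε κ (fun a b hab => by
    have := (abs_le.1 (hm y.2 hy1 a b hab)).2; linarith) y.1 x.1 hy2.le
  have a2 := hw.modu x.2 y.2 ε κ (fun a b hab => by
    have := (abs_le.1 (hm y.2 hy1 b a (by rw [← Real.cos_neg, neg_sub]; exact hab))).1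
    linarith) x.1 y.1 (by rw [← Real.cos_neg, neg_sub]; exact hy2.le)
  rw [abs_le]; constructor <;> linarith

lemma C0.continuous {m : ℕ} {v w : Xm m → ℝ} (hv : Continuous v) (hp : Per v) (h : C0 v w) :
    Continuous w := by
  rw [continuous_iff_continuousAt]
  intro x
  rw [Metric.continuousAt_iff']
  intro ε he
  filter_upwards [C0.modulus hv hp x (half_pos he)] with y hy
  have := hy w h
  rw [dist_comm, Real.dist_eq]; linarith

lemma exists_bound {m : ℕ} {v : Xm m → ℝ} (hv : Continuous v) (hp : Per v) (x' : Em m) :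
    ∃ M, ∀ a, v (a, x') ≤ M := by
  obtain ⟨M, hM⟩ := (isCompact_Icc (a := -π) (b := π)).bddAbove_image
    (f := fun a => v (a, x')) (by fun_prop)
  refine ⟨M, fun a => ?_⟩
  rw [← per_fo (g := fun a => v (a, x')) (fun a => hp (a, x')) a]
  exact hM ⟨fo a, Set.Ico_subset_Icc_self (fo_mem a), rfl⟩

lemma isClosed_C0 {m : ℕ} (v : Xm m → ℝ) : IsClosed {w : Xm m → ℝ | C0 v w} := by
  have : {w : Xm m → ℝ | C0 v w} = {w | Per w} ∩ {w | ∀ x, 0 ≤ w x} ∩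
      {w | ∀ (x' : Em m) (r : ℝ), (∀ a, v (a, x') ≤ r) → ∀ a, w (a, x') ≤ r} ∩
      {w | ∀ (x' y' : Em m) (r κ : ℝ),
        (∀ a b, κ ≤ Real.cos (a - b) → v (a, x') ≤ v (b, y') + r) →
        ∀ a b, κ ≤ Real.cos (a - b) → w (a, x') ≤ w (b, y') + r} := by
    ext w
    exact ⟨fun h => ⟨⟨⟨h.1, h.2⟩, h.3⟩, h.4⟩, fun h => ⟨h.1.1.1, h.1.1.2, h.1.2, h.2⟩⟩
  rw [this]
  refine ((IsClosed.inter ?_ ?_).inter ?_).inter ?_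
  · unfold Per
    simp only [Set.setOf_forall]
    exact isClosed_iInter fun x => isClosed_eq (by fun_prop) (by fun_prop)
  · simp only [Set.setOf_forall]
    exact isClosed_iInter fun x => isClosed_le (by fun_prop) (by fun_prop)
  · simp only [Set.setOf_forall]
    exact isClosed_iInter fun x => isClosed_iInter fun r => isClosed_iInter fun _ =>
      isClosed_iInter fun a => isClosed_le (by fun_prop) (by fun_prop)
  · simp only [Set.setOf_forall]
    exact isClosed_iInter fun x => isClosed_iInter fun r => isClosed_iInter fun _ =>
      isClosed_iInter fun _ => isClosed_iInter fun _ => isClosed_iInter fun _ =>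
      isClosed_iInter fun _ => isClosed_iInter fun _ => isClosed_le (by fun_prop) (by fun_prop)

lemma C0.subseq {m : ℕ} {v : Xm m → ℝ} (hv : Continuous v) (hp : Per v) (W : ℕ → Xm m → ℝ)
    (hW : ∀ k, C0 v (W k)) : ∃ w, C0 v w ∧ ∃ ψ : ℕ → ℕ, StrictMono ψ ∧
      ∀ x, Tendsto (fun k => W (ψ k) x) atTop (𝓝 (w x)) := by
  set S : Set C(Xm m, ℝ) := {f | C0 v f} with hS
  have himg : (ContinuousMap.toFun '' S) = {w : Xm m → ℝ | C0 v w} := by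
    ext w
    constructor
    · rintro ⟨f, hf, rfl⟩; exact hf
    · intro hw
      exact ⟨⟨w, hw.continuous hv hp⟩, hw, rfl⟩
  have hcpt : IsCompact (ContinuousMap.toFun '' S) := by
    rw [himg]
    choose M hM using exists_bound hv hp
    have hpi : IsCompact (Set.pi Set.univ fun x : Xm m => Set.Icc 0 (M x.2)) :=
      isCompact_univ_pi fun x => isCompact_Icc
    refine hpi.of_isClosed_subset (isClosed_C0 v) ?_
    intro w hw x _
    exact ⟨hw.nonneg x, hw.bdd x.2 _ (hM x.2) x.1⟩
  have hequi : Equicontinuous ((↑) : S → Xm m → ℝ) := by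
    intro x
    rw [Metric.equicontinuousAt_iff_right]
    intro ε he
    filter_upwards [C0.modulus hv hp x (half_pos he)] with y hy f
    have := hy _ f.2
    rw [Real.dist_eq]
    have h2 : ε / 2 < ε := by linarith
    exact lt_of_le_of_lt this h2
  have hSc : IsCompact S := ArzelaAscoli.isCompact_of_equicontinuous S hcpt hequi
  obtain ⟨f, hf, ψ, hψ, ht⟩ := hSc.isSeqCompact
    (x := fun k => (⟨W k, (hW k).continuous hv hp⟩ : C(Xm m, ℝ))) (fun k => hW k)
  refine ⟨f, hf, ψ, hψ, fun x => ?_⟩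
  have hc : Continuous fun g : C(Xm m, ℝ) => g x := continuous_eval_const x
  have := (hc.tendsto f).comp ht
  exact this

end Stmt9

namespace Stmt9
open Filter Topology
open scoped NNReal BoundedContinuousFunction

/-! ### Part 8: maximisation -/

lemma Equi.lim {m : ℕ} {v w : Xm m → ℝ} (hv : Continuous v) (hw : Continuous w)
    {W : ℕ → Xm m → ℝ} (hWc : ∀ k, Continuous (W k)) (hW : ∀ k, Equi v (W k))
    (hl : ∀ x, Tendsto (fun k => W k x) atTop (𝓝 (w x))) : Equi v w := by
  intro x'
  set μ := (volume : Measure ℝ).restrict (Set.Ioo (-π) π)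
  have hwm : Measurable fun a => w (a, x') := by fun_prop
  have hvm : Measurable fun a => v (a, x') := by fun_prop
  have heq : μ.map (fun a => w (a, x')) = μ.map (fun a => v (a, x')) := by
    refine ext_of_forall_lintegral_eq_of_IsFiniteMeasure fun f => ?_
    have hfm : Measurable fun t : ℝ => ((f t : ℝ≥0) : ℝ≥0∞) :=
      measurable_coe_nnreal_ennreal.comp f.continuous.measurable
    rw [lintegral_map hfm hwm, lintegral_map hfm hvm]
    have ht : Tendsto (fun k => ∫⁻ a, ((f (W k (a, x')) : ℝ≥0) : ℝ≥0∞) ∂μ) atTop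
        (𝓝 (∫⁻ a, ((f (w (a, x')) : ℝ≥0) : ℝ≥0∞) ∂μ)) := by
      refine tendsto_lintegral_of_dominated_convergence (fun _ => ((nndist f 0 : ℝ≥0) : ℝ≥0∞)) ?_ ?_ ?_ ?_
      · intro k
        have : Measurable fun a => W k (a, x') := by have := hWc k; fun_prop
        exact hfm.comp this
      · intro k
        refine ae_of_all _ fun a => ?_
        exact ENNReal.coe_le_coe.2 (BoundedContinuousFunction.NNReal.upper_bound f _)
      · rw [lintegral_const]
        exact ENNReal.mul_ne_top ENNReal.coe_ne_top (measure_ne_top μ _)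
      · refine ae_of_all _ fun a => ?_
        exact ENNReal.tendsto_coe.2 ((f.continuous.tendsto _).comp (hl (a, x')))
    have hc : ∀ k, ∫⁻ a, ((f (W k (a, x')) : ℝ≥0) : ℝ≥0∞) ∂μ =
        ∫⁻ a, ((f (v (a, x')) : ℝ≥0) : ℝ≥0∞) ∂μ := fun k => hW k x' _ hfm
    simp_rw [hc] at ht
    exact tendsto_nhds_unique ht tendsto_const_nhds |>.symm ▸ rfl
  intro φ hφ
  have := lintegral_map (μ := μ) hφ hwm
  rw [heq, lintegral_map hφ hvm] at this
  exact this.symm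

lemma gagP_lsc {m : ℕ} {s : ℝ} (hs : 0 < s) {w : Xm m → ℝ} (hw : Continuous w) (hp : Per w)
    {W : ℕ → Xm m → ℝ} (hWc : ∀ k, Continuous (W k)) (hWp : ∀ k, Per (W k))
    (hl : ∀ x, Tendsto (fun k => W k x) atTop (𝓝 (w x))) {C : ℝ≥0∞}
    (hC : ∀ k, gagP m s 1 (W k) ≤ C) : gagP m s 1 w ≤ C := by
  have hβ := beta_gt m hs
  rw [gagP_fold m s hs w hw.measurable hp]
  set β := (m : ℝ) + 1 + s
  have h1 : ∫⁻ p, ENNReal.ofReal |w p.1 - w p.2| * gK β p.1 p.2 ∂((SM m).prod (SM m)) =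
      ∫⁻ p, liminf (fun k => ENNReal.ofReal |W k p.1 - W k p.2| * gK β p.1 p.2) atTop
        ∂((SM m).prod (SM m)) := by
    refine lintegral_congr_ae ?_
    filter_upwards [ae_good m 0] with p hp
    have hk := gK_top (m := m) hβ hp.2.2.1
    refine (Tendsto.liminf_eq ?_).symm
    refine ENNReal.Tendsto.mul_const ?_ (Or.inr hk)
    exact ENNReal.tendsto_ofReal ((hl p.1).sub (hl p.2)).abs
  rw [h1]
  refine (lintegral_liminf_le fun k => meas_F β (hWc k).measurable).trans ?_
  have h2 : ∀ k, ∫⁻ p, ENNReal.ofReal |W k p.1 - W k p.2| * gK β p.1 p.2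
      ∂((SM m).prod (SM m)) ≤ C := by
    intro k
    rw [← gagP_fold m s hs (W k) (hWc k).measurable (hWp k)]
    exact hC k
  refine (liminf_le_liminf (Eventually.of_forall h2)).trans ?_
  simp

/-- finite measure on the strip equivalent to Lebesgue -/
noncomputable def MM (m : ℕ) : Measure (Xm m) :=
  (volume.restrict (Set.Ioo (-π) π)).prod (volume : Measure (Em m)).toFinite

instance (m : ℕ) : IsFiniteMeasure (MM m) := by unfold MM; infer_instance

lemma MM_ac (m : ℕ) : MM m ≪ SM m :=
  Measure.AbsolutelyContinuous.prod Measure.AbsolutelyContinuous.rfl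
    (toFinite_absolutelyContinuous _)

lemma SM_ac (m : ℕ) : SM m ≪ MM m :=
  Measure.AbsolutelyContinuous.prod Measure.AbsolutelyContinuous.rfl
    (absolutelyContinuous_toFinite _)

lemma lint_rf_MM {m : ℕ} {G : Xm m → ℝ≥0∞} (hG : Measurable G) (hp : Per G) (c : ℝ) :
    ∫⁻ x, G (rf c x) ∂(MM m) = ∫⁻ x, G x ∂(MM m) := by
  have h2 : Measurable fun x => G (rf c x) := hG.comp (continuous_rf c).measurable
  rw [MM, lintegral_prod_symm _ h2.aemeasurable, lintegral_prod_symm _ hG.aemeasurable]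
  refine lintegral_congr fun y => ?_
  exact lint_per_reflect (g := fun a => G (a, y)) (fun a => hp (a, y)) c

/-- density of the functional -/
noncomputable def jr {m : ℕ} (w : Xm m → ℝ) (x : Xm m) : ℝ :=
  Real.arctan (w x) * (1 + Real.cos x.1)

/-- functional -/
noncomputable def JJ {m : ℕ} (w : Xm m → ℝ) : ℝ≥0∞ := ∫⁻ x, ENNReal.ofReal (jr w x) ∂(MM m)

lemma jr_nonneg {m : ℕ} {w : Xm m → ℝ} (h0 : ∀ x, 0 ≤ w x) (x : Xm m) : 0 ≤ jr w x := by
  unfold jr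
  have := Real.neg_one_le_cos x.1
  exact mul_nonneg (Real.arctan_nonneg.2 (h0 x)) (by linarith)

lemma jr_le {m : ℕ} (w : Xm m → ℝ) (x : Xm m) : jr w x ≤ π := by
  unfold jr
  have h1 := Real.neg_one_le_cos x.1
  have h2 := Real.cos_le_one x.1
  have h3 := Real.arctan_lt_pi_div_two (w x)
  have := Real.pi_pos
  nlinarith

lemma continuous_jr {m : ℕ} {w : Xm m → ℝ} (hw : Continuous w) : Continuous (jr w) := by
  unfold jr
  have := Real.continuous_arctan
  fun_prop

lemma JJ_le {m : ℕ} (w : Xm m → ℝ) : JJ w ≤ ENNReal.ofReal π * MM m Set.univ := by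
  unfold JJ
  rw [← lintegral_const]
  exact lintegral_mono fun x => ENNReal.ofReal_le_ofReal (jr_le w x)

lemma JJ_lt_top {m : ℕ} (w : Xm m → ℝ) : JJ w ≠ ⊤ :=
  ne_top_of_le_ne_top (ENNReal.mul_ne_top ENNReal.ofReal_ne_top (measure_ne_top _ _)) (JJ_le w)

lemma JJ_lim {m : ℕ} {w : Xm m → ℝ}
    {W : ℕ → Xm m → ℝ} (hWc : ∀ k, Continuous (W k))
    (hl : ∀ x, Tendsto (fun k => W k x) atTop (𝓝 (w x))) :
    Tendsto (fun k => JJ (W k)) atTop (𝓝 (JJ w)) := by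
  refine tendsto_lintegral_of_dominated_convergence (fun _ => ENNReal.ofReal π) ?_ ?_ ?_ ?_
  · intro k
    exact ((continuous_jr (hWc k)).measurable).ennreal_ofReal
  · intro k
    exact ae_of_all _ fun x => ENNReal.ofReal_le_ofReal (jr_le _ x)
  · rw [lintegral_const]
    exact ENNReal.mul_ne_top ENNReal.ofReal_ne_top (measure_ne_top _ _)
  · refine ae_of_all _ fun x => ENNReal.tendsto_ofReal ?_
    exact ((Real.continuous_arctan.tendsto _).comp (hl x)).mul_const _

lemma Per.jr {m : ℕ} {w : Xm m → ℝ} (hp : Per w) : Per (jr w) := by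
  intro x
  simp only [Stmt9.jr]
  rw [hp x, Real.cos_add_two_pi]

lemma two_JJ {m : ℕ} {w : Xm m → ℝ} (hw : Continuous w) (hp : Per w) (h0 : ∀ x, 0 ≤ w x) (c : ℝ) :
    2 * JJ w = ∫⁻ x, ENNReal.ofReal (jr w x + jr w (rf c x)) ∂(MM m) := by
  have hm : Measurable fun x => ENNReal.ofReal (jr w x) :=
    ((continuous_jr hw).measurable).ennreal_ofReal
  simp_rw [ENNReal.ofReal_add (jr_nonneg h0 _) (jr_nonneg h0 _)]
  rw [lintegral_add_left hm, two_mul]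
  congr 1
  refine (lint_rf_MM hm ?_ c).symm
  intro x
  simp only
  rw [hp.jr x]

lemma cos_diff2 {m : ℕ} (c : ℝ) (x : Xm m) :
    Real.cos x.1 - Real.cos (rf c x).1 = -2 * Real.sin c * Real.sin (x.1 - c) := by
  simp only [rf]
  rw [Real.cos_sub_cos, show (x.1 + (2 * c - x.1)) / 2 = c by ring,
    show (x.1 - (2 * c - x.1)) / 2 = x.1 - c by ring]

lemma jr_pol_le {m : ℕ} {w : Xm m → ℝ} (hp : Per w) {c : ℝ} (hc : Real.sin c < 0) (x : Xm m) :
    jr w x + jr w (rf c x) ≤ jr (pol c w) x + jr (pol c w) (rf c x) := by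
  have hd := cos_diff2 c x
  rcases lt_trichotomy (Real.sin (x.1 - c)) 0 with h | h | h
  · unfold jr
    rw [(pol_neg h).1, (pol_neg h).2]
    rcases le_total (w x) (w (rf c x)) with h1 | h1
    · simp [h1]
    · have := Real.arctan_mono h1
      simp only [min_eq_right h1, max_eq_left h1]
      have : 0 ≤ (Real.arctan (w x) - Real.arctan (w (rf c x))) *
        (Real.cos (rf c x).1 - Real.cos x.1) := mul_nonneg (by linarith) (by nlinarith)
      nlinarith
  · have e : pol c w (rf c x) = pol c w x := (hp.pol c).rf_fix h
    have e2 : w (rf c x) = w x := hp.rf_fix h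
    have e3 : pol c w x = w x := by unfold pol; rw [e2]; simp
    unfold jr
    rw [e, e2, e3]
  · unfold jr
    rw [(pol_pos h).1, (pol_pos h).2]
    rcases le_total (w x) (w (rf c x)) with h1 | h1
    · have := Real.arctan_mono h1
      simp only [min_eq_left h1, max_eq_right h1]
      have : 0 ≤ (Real.arctan (w (rf c x)) - Real.arctan (w x)) *
        (Real.cos x.1 - Real.cos (rf c x).1) := mul_nonneg (by linarith) (by nlinarith)
      nlinarith
    · simp [h1]

lemma jr_eq_case {m : ℕ} {w : Xm m → ℝ} (hw : Continuous w) (hp : Per w) (h0 : ∀ x, 0 ≤ w x)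
    {c : ℝ} (hc : Real.sin c < 0) (h0' : ∀ x, 0 ≤ pol c w x)
    (hle : JJ (pol c w) ≤ JJ w) (x : Xm m) (hx : 0 < Real.sin (x.1 - c)) : w (rf c x) ≤ w x := by
  have hr := continuous_rf (m := m) c
  have hpc := continuous_pol hw hp c
  have cj := continuous_jr hw
  have cjp := continuous_jr hpc
  have hae : (fun x => ENNReal.ofReal (jr w x + jr w (rf c x))) =ᵐ[MM m]
      fun x => ENNReal.ofReal (jr (pol c w) x + jr (pol c w) (rf c x)) := by
    refine ae_eq_of_ae_le_of_lintegral_le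
      (ae_of_all _ fun x => ENNReal.ofReal_le_ofReal (jr_pol_le hp hc x)) ?_ ?_ ?_
    · rw [← two_JJ hw hp h0]
      exact ENNReal.mul_ne_top (by norm_num) (JJ_lt_top w)
    · fun_prop
    · rw [← two_JJ hw hp h0, ← two_JJ hpc (hp.pol c) h0']
      gcongr
  have hall : ∀ x, jr w x + jr w (rf c x) = jr (pol c w) x + jr (pol c w) (rf c x) := by
    refine ae_closed_all (isClosed_eq (by fun_prop) (by fun_prop)) ?_ ?_
    · intro x
      have a1 := hp.jr x
      have a2 := hp.jr.rf c x
      have a3 := (hp.pol c).jr x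
      have a4 := (hp.pol c).jr.rf c x
      simp only at a2 a4
      simp only [a1, a2, a3, a4]
    · filter_upwards [(SM_ac m).ae_le hae] with x hx
      have n1 := jr_nonneg h0 x
      have n2 := jr_nonneg h0 (rf c x)
      have n3 := jr_nonneg h0' x
      have n4 := jr_nonneg h0' (rf c x)
      exact (ENNReal.ofReal_eq_ofReal_iff (by linarith) (by linarith)).1 hx
  have := hall x
  by_contra! hlt
  have hd := cos_diff2 c x
  unfold jr at this
  rw [(pol_pos hx).1, (pol_pos hx).2, max_eq_right hlt.le, min_eq_left hlt.le] at this
  have h1 := Real.arctan_strictMono hlt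
  have h2 : 0 < Real.cos x.1 - Real.cos (rf c x).1 := by
    rw [hd]
    have := mul_pos (neg_pos.2 hc) hx
    linarith
  have h3 := mul_pos (sub_pos.2 h1) h2
  nlinarith

lemma exists_symmdec {m : ℕ} {s : ℝ} (hs : 0 < s) {v : Xm m → ℝ} (hv : Continuous v) (hp : Per v)
    (h0 : ∀ x, 0 ≤ v x) : ∃ w : Xm m → ℝ, Continuous w ∧ Per w ∧ (∀ x, 0 ≤ w x) ∧
      gagP m s 1 w ≤ gagP m s 1 v ∧ Equi v w ∧
      ∀ (x' : Em m) a b, Real.cos b < Real.cos a → w (b, x') ≤ w (a, x') := by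
  set S : Set (Xm m → ℝ) := {w | C0 v w ∧ Equi v w ∧ gagP m s 1 w ≤ gagP m s 1 v} with hS
  have hvS : v ∈ S := ⟨C0.refl hp h0, fun _ _ _ => rfl, le_rfl⟩
  obtain ⟨U, -, hU, hUS⟩ := exists_seq_tendsto_sSup (S := JJ '' S) ⟨_, v, hvS, rfl⟩
    (OrderTop.bddAbove _)
  choose W hWS hWU using hUS
  obtain ⟨w, hw, ψ, hψ, hlim⟩ := C0.subseq hv hp W (fun k => (hWS k).1)
  have hwc := hw.continuous hv hp
  have hWc : ∀ k, Continuous (W (ψ k)) := fun k => (hWS _).1.continuous hv hp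
  have hE : Equi v w := Equi.lim hv hwc hWc (fun k => (hWS _).2.1) hlim
  have hG : gagP m s 1 w ≤ gagP m s 1 v :=
    gagP_lsc hs hwc hw.per hWc (fun k => (hWS _).1.per) hlim (fun k => (hWS _).2.2)
  have hJ : JJ w = sSup (JJ '' S) := by
    refine tendsto_nhds_unique (JJ_lim hWc hlim) ?_
    have := hU.comp hψ.tendsto_atTop
    refine this.congr fun k => ?_
    simp [hWU]
  have hmax : ∀ c, JJ (pol c w) ≤ JJ w := by
    intro c
    rw [hJ]
    refine le_sSup ⟨pol c w, ⟨hw.pol c, hE.pol hwc hw.per c, ?_⟩, rfl⟩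
    exact (gagP_pol_le m hs c hwc.measurable hw.per).trans hG
  refine ⟨w, hwc, hw.per, hw.nonneg, hG, hE, ?_⟩
  intro x' a b hab
  have hcc : Real.cos a - Real.cos b = -2 * Real.sin ((a + b) / 2) * Real.sin ((a - b) / 2) :=
    Real.cos_sub_cos a b
  have key : ∀ c, Real.sin c < 0 → 0 < Real.sin (a - c) → w (2 * c - a, x') ≤ w (a, x') :=
    fun c hc hx => jr_eq_case hwc hw.per hw.nonneg hc (hw.pol c).nonneg (hmax c) (a, x') hx
  rcases lt_trichotomy (Real.sin ((a + b) / 2)) 0 with h | h | h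
  · have := key ((a + b) / 2) h (by
      rw [show a - (a + b) / 2 = (a - b) / 2 by ring]; nlinarith)
    rwa [show 2 * ((a + b) / 2) - a = b by ring] at this
  · rw [h] at hcc; linarith
  · have := key ((a + b) / 2 + π) (by rw [Real.sin_add_pi]; linarith) (by
      rw [show a - ((a + b) / 2 + π) = (a - b) / 2 - π by ring, Real.sin_sub_pi]; nlinarith)
    rw [show 2 * ((a + b) / 2 + π) - a = b + 2 * π by ring] at this
    rwa [hw.per (b, x')] at this

end Stmt9

namespace Stmt9
open Filter Topology

/-! ### Part 9: comparison with the rearrangement -/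

lemma vae_sin (m : ℕ) (c : ℝ) : ∀ᵐ x : Xm m, Real.sin (x.1 - c) ≠ 0 := by
  rw [ae_iff]
  have : {a : Xm m | ¬ Real.sin (a.1 - c) ≠ 0} = {t : ℝ | Real.sin (t - c) = 0} ×ˢ Set.univ := by
    ext; simp
  rw [this, Measure.volume_eq_prod, Measure.prod_prod]
  rw [(countable_sin c).measure_zero]; simp

lemma cos_ne_neg_of_sin {t : ℝ} (h : Real.sin t ≠ 0) : Real.cos t ≠ -1 := by
  intro h2
  have := Real.sin_sq_add_cos_sq t
  rw [h2] at this
  apply h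
  nlinarith

lemma gagP_congr_ae {m : ℕ} {s : ℝ} (hs : 0 < s) {u w : Xm m → ℝ} (h : u =ᵐ[volume] w) :
    gagP m s 1 u = gagP m s 1 w := by
  rw [gagP_unfold m s hs, gagP_unfold m s hs]
  refine lintegral_congr_ae ?_
  have : ∀ᵐ x ∂(SM m), u x = w x := by
    rw [← SM_eq]; exact ae_restrict_of_ae h
  filter_upwards [this] with x hx
  refine lintegral_congr_ae ?_
  filter_upwards [h] with y hy
  rw [hx, hy]

lemma rearr_ae {m : ℕ} {u w : Xm m → ℝ} (hu : Continuous u) (hw : Continuous w) (hp : Per w)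
    (h0 : ∀ x, 0 ≤ w x) (hE : Equi (fun x => |u x|) w)
    (hdec : ∀ (x' : Em m) a b, Real.cos b < Real.cos a → w (b, x') ≤ w (a, x')) :
    perRearr1 m u =ᵐ[volume] w := by
  filter_upwards [vae_sin m 0] with x hx
  rw [sub_zero] at hx
  have := perRearr_eq (f := fun t => |u (t, x.2)|) (g := fun a => w (a, x.2)) (by fun_prop)
    (fun a => hp (a, x.2)) (fun a => h0 _) (fun a b => hdec x.2 a b)
    (fun t _ => (hE.slm (by fun_prop) hw x.2 t).symm) (cos_ne_neg_of_sin hx)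
  exact this

lemma Per.abs {m : ℕ} {u : Xm m → ℝ} (hp : Per u) : Per fun x => |u x| := by
  intro x; simp only; rw [hp x]

lemma rearr_le_pol {m : ℕ} {s : ℝ} (hs : 0 < s) {u : Xm m → ℝ} (hu : Continuous u) (hp : Per u)
    (c : ℝ) : gagP m s 1 (perRearr1 m u) ≤ gagP m s 1 (pol c fun x => |u x|) := by
  have hv : Continuous fun x => |u x| := hu.abs
  have hvC : C0 (fun x => |u x|) (fun x => |u x|) := C0.refl hp.abs (fun x => abs_nonneg _)
  have hE : Equi (fun x => |u x|) (pol c fun x => |u x|) :=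
    Equi.pol hv hp.abs (fun _ _ _ => rfl) c
  obtain ⟨w, w1, w2, w3, w4, w5, w6⟩ := exists_symmdec hs (continuous_pol hv hp.abs c)
    (hp.abs.pol c) (hvC.pol c).nonneg
  have hE2 : Equi (fun x => |u x|) w := fun x' φ hφ => (w5 x' φ hφ).trans (hE x' φ hφ)
  rw [gagP_congr_ae hs (rearr_ae hu w1 w2 w3 hE2 w6)]
  exact w4

lemma gagP_abs_le {m : ℕ} {s : ℝ} (hs : 0 < s) (u : Xm m → ℝ) :
    gagP m s 1 (fun x => |u x|) ≤ gagP m s 1 u := by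
  rw [gagP_unfold m s hs, gagP_unfold m s hs]
  refine lintegral_mono fun x => lintegral_mono fun y => ?_
  have : ENNReal.ofReal |(|u x| - |u y|)| ≤ ENNReal.ofReal |u x - u y| :=
    ENNReal.ofReal_le_ofReal (abs_abs_sub_abs_le _ _)
  simp only
  gcongr

lemma gK_ne_zero {m : ℕ} {β : ℝ} (hβ : 1 < β) {x y : Xm m} (h3 : Real.sin (y.1 - x.1) ≠ 0) :
    gK β x y ≠ 0 := by
  have h4 : Real.sin (x.1 - y.1) ≠ 0 := by
    rw [← neg_sub, Real.sin_neg]; exact neg_ne_zero.2 h3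
  have : KK β π ‖x.2 - y.2‖ < KK β (x.1 - y.1) ‖x.2 - y.2‖ := by
    refine KK_strict hβ ?_ (Or.inr (cos_ne_of_sin h4))
    rw [Real.cos_pi]
    exact lt_of_le_of_ne (Real.neg_one_le_cos _) (cos_ne_neg_of_sin h4).symm
  exact (lt_of_le_of_lt zero_le this).ne'

lemma sign_of_eq {m : ℕ} {s : ℝ} (hs : 0 < s) {u : Xm m → ℝ} (hu : Continuous u) (hp : Per u)
    (hfin : gagP m s 1 u ≠ ⊤) (hle : gagP m s 1 u ≤ gagP m s 1 (fun x => |u x|)) :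
    (∀ x, u x = |u x|) ∨ (∀ x, u x = -|u x|) := by
  have hβ := beta_gt m hs
  have hle' := gagP_abs_le hs u
  have hfin' := ne_top_of_le_ne_top hfin hle'
  have hv : Continuous fun x => |u x| := hu.abs
  rw [gagP_fold m s hs u hu.measurable hp, gagP_fold m s hs _ hv.measurable hp.abs] at hle
  rw [gagP_fold m s hs _ hv.measurable hp.abs] at hfin'
  set β := (m : ℝ) + 1 + s
  have hae : (fun p : Xm m × Xm m => ENNReal.ofReal |(|u p.1| - |u p.2|)| * gK β p.1 p.2)
      =ᵐ[(SM m).prod (SM m)] fun p => ENNReal.ofReal |u p.1 - u p.2| * gK β p.1 p.2 := by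
    refine ae_eq_of_ae_le_of_lintegral_le (ae_of_all _ fun p => ?_) hfin'
      (meas_F β hu.measurable).aemeasurable hle
    have : ENNReal.ofReal |(|u p.1| - |u p.2|)| ≤ ENNReal.ofReal |u p.1 - u p.2| :=
      ENNReal.ofReal_le_ofReal (abs_abs_sub_abs_le _ _)
    simp only
    gcongr
  have hae2 : ∀ᵐ p ∂((SM m).prod (SM m)), u p.1 ≤ 0 ∨ 0 ≤ u p.2 := by
    filter_upwards [hae, ae_good m 0] with p h1 h2
    by_contra! hcon
    obtain ⟨c1, c2⟩ := hcon
    have h3 := (ENNReal.mul_left_inj (gK_ne_zero hβ h2.2.2.1) (gK_top hβ h2.2.2.1)).1 h1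
    have h4 := (ENNReal.ofReal_eq_ofReal_iff (abs_nonneg _) (abs_nonneg _)).1 h3
    rw [abs_of_pos c1, abs_of_neg c2, abs_of_pos (by linarith : 0 < u p.1 - u p.2)] at h4
    rcases abs_cases (u p.1 - -u p.2) with h5 | h5 <;> linarith
  have h3 := Measure.ae_ae_of_ae_prod hae2
  have h4 : ∀ᵐ x ∂(SM m), ∀ y, u x ≤ 0 ∨ 0 ≤ u y := by
    filter_upwards [h3] with x hx
    refine ae_closed_all (closed_or isClosed_const (isClosed_le (by fun_prop) (by fun_prop)))
      ?_ hx
    intro z; simp only; rw [hp z]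
  have h5 : ∀ y x, u x ≤ 0 ∨ 0 ≤ u y := by
    intro y
    refine ae_closed_all (closed_or (isClosed_le (by fun_prop) (by fun_prop)) isClosed_const)
      ?_ (h4.mono fun x hx => hx y)
    intro z; simp only; rw [hp z]
  by_cases hq : ∀ x, u x ≤ 0
  · right; intro x; rw [abs_of_nonpos (hq x)]; ring
  · left
    push Not at hq
    obtain ⟨x, hx⟩ := hq
    intro y
    rcases h5 y x with h | h
    · linarith
    · rw [abs_of_nonneg h]

/-- the type condition for the superlevel sets -/
lemma type_cond {m : ℕ} {s : ℝ} (hs : 0 < s) {u : Xm m → ℝ} (hu : Continuous u) (hp : Per u)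
    (hfin : gagP m s 1 u ≠ ⊤) (heq : gagP m s 1 (perRearr1 m u) = gagP m s 1 u) (c τ : ℝ)
    (x y : Xm m) (hx : 0 < Real.sin (x.1 - c)) (hy : 0 < Real.sin (y.1 - c)) :
    ¬ (|u x| ≤ τ ∧ τ < |u (rf c x)| ∧ |u (rf c y)| ≤ τ ∧ τ < |u y|) := by
  have hle := gagP_abs_le hs u
  refine pol_eq_case hs c (w := fun x => |u x|) hu.abs hp.abs (ne_top_of_le_ne_top hfin hle) ?_
    x y hx hy τ
  exact hle.trans (heq ▸ rearr_le_pol hs hu hp c)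

lemma pol_le_abs {m : ℕ} {s : ℝ} (hs : 0 < s) {u : Xm m → ℝ} (hu : Continuous u) (hp : Per u) :
    gagP m s 1 (perRearr1 m u) ≤ gagP m s 1 (fun x => |u x|) :=
  (rearr_le_pol hs hu hp 0).trans (gagP_pol_le m hs 0 hu.abs.measurable hp.abs)

end Stmt9

namespace Stmt9
open Filter Topology

/-! ### Part 10: from the two-point condition to translates -/

lemma int_rf_MM {m : ℕ} {g : Xm m → ℝ} (hg : Measurable g) (hp : Per g)
    (hi : Integrable g (MM m)) (c : ℝ) :
    Integrable (fun x => g (rf c x)) (MM m) ∧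
      ∫ x, g (rf c x) ∂(MM m) = ∫ x, g x ∂(MM m) := by
  have hm : Measurable fun x => g (rf c x) := hg.comp (continuous_rf c).measurable
  have hi2 : Integrable (fun x => g (rf c x)) (MM m) := by
    refine ⟨hm.aestronglyMeasurable, ?_⟩
    have h2 := hi.2
    unfold HasFiniteIntegral at h2 ⊢
    have := lint_rf_MM (G := fun x => ‖g x‖ₑ) hg.enorm (fun x => by simp only; rw [hp x]) c
    rw [this]; exact h2
  refine ⟨hi2, ?_⟩
  rw [integral_eq_lintegral_pos_part_sub_lintegral_neg_part hi2,
    integral_eq_lintegral_pos_part_sub_lintegral_neg_part hi]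
  have h1 := lint_rf_MM (G := fun x => ENNReal.ofReal (g x)) hg.ennreal_ofReal
    (fun x => by simp only; rw [hp x]) c
  have h2 := lint_rf_MM (G := fun x => ENNReal.ofReal (-g x)) hg.neg.ennreal_ofReal
    (fun x => by simp only; rw [hp x]) c
  rw [h1, h2]

/-- the indicator -/
noncomputable def ch {m : ℕ} (A : Set (Xm m)) : Xm m → ℝ := A.indicator fun _ => (1 : ℝ)

lemma ch_of {m : ℕ} {A : Set (Xm m)} {x : Xm m} (h : x ∈ A) : ch A x = 1 := by simp [ch, h]
lemma ch_not {m : ℕ} {A : Set (Xm m)} {x : Xm m} (h : x ∉ A) : ch A x = 0 := by simp [ch, h]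

lemma ch_nonneg {m : ℕ} (A : Set (Xm m)) (x : Xm m) : 0 ≤ ch A x := by
  by_cases h : x ∈ A
  · rw [ch_of h]; norm_num
  · rw [ch_not h]

lemma ch_le {m : ℕ} (A : Set (Xm m)) (x : Xm m) : ch A x ≤ 1 := by
  by_cases h : x ∈ A
  · rw [ch_of h]
  · rw [ch_not h]; norm_num

lemma measurable_ch {m : ℕ} {A : Set (Xm m)} (hA : MeasurableSet A) : Measurable (ch A) :=
  measurable_const.indicator hA

lemma per_ch {m : ℕ} {A : Set (Xm m)} (hp : Per (fun x => x ∈ A)) : Per (ch A) := by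
  intro x
  have := hp x
  simp only [eq_iff_iff] at this
  by_cases h : x ∈ A
  · rw [ch_of h, ch_of (this.2 h)]
  · rw [ch_not h, ch_not (fun h2 => h (this.1 h2))]

lemma integrable_ch_mul {m : ℕ} {A : Set (Xm m)} (hA : MeasurableSet A) {f : Xm m → ℝ}
    (hf : Measurable f) (hb : ∀ x, |f x| ≤ 1) : Integrable (fun x => ch A x * f x) (MM m) := by
  refine Integrable.of_bound ((measurable_ch hA).mul hf).aestronglyMeasurable 1 ?_
  refine ae_of_all _ fun x => ?_
  rw [Real.norm_eq_abs, abs_mul, abs_of_nonneg (ch_nonneg A x)]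
  exact mul_le_one₀ (ch_le A x) (abs_nonneg _) (hb x)

/-- first moment -/
noncomputable def Bm {m : ℕ} (A : Set (Xm m)) (c : ℝ) : ℝ :=
  ∫ x, ch A x * Real.sin (x.1 - c) ∂(MM m)

lemma Bm_eq {m : ℕ} {A : Set (Xm m)} (hA : MeasurableSet A) (c : ℝ) :
    Bm A c = Real.cos c * (∫ x, ch A x * Real.sin x.1 ∂(MM m)) -
      Real.sin c * (∫ x, ch A x * Real.cos x.1 ∂(MM m)) := by
  rw [← integral_const_mul, ← integral_const_mul, ← integral_sub]
  · unfold Bm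
    congr 1; ext x; rw [Real.sin_sub]; ring
  · exact (integrable_ch_mul hA (by fun_prop) fun x => Real.abs_sin_le_one _).const_mul _
  · exact (integrable_ch_mul hA (by fun_prop) fun x => Real.abs_cos_le_one _).const_mul _

lemma Dm_int {m : ℕ} {A : Set (Xm m)} (hA : MeasurableSet A) (hp : Per (fun x => x ∈ A)) (c : ℝ) :
    Integrable (fun x => (ch A x - ch A (rf c x)) * Real.sin (x.1 - c)) (MM m) ∧
    ∫ x, (ch A x - ch A (rf c x)) * Real.sin (x.1 - c) ∂(MM m) = 2 * Bm A c := by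
  have hi := integrable_ch_mul (m := m) hA (f := fun x => Real.sin (x.1 - c)) (by fun_prop)
    fun x => Real.abs_sin_le_one _
  have hper : Per fun x : Xm m => ch A x * Real.sin (x.1 - c) := by
    intro x
    simp only
    rw [per_ch hp x, show x.1 + 2 * π - c = x.1 - c + 2 * π by ring, Real.sin_add_two_pi]
  obtain ⟨h1, h2⟩ := int_rf_MM (g := fun x : Xm m => ch A x * Real.sin (x.1 - c)) ((measurable_ch hA).mul (by fun_prop)) hper hi c
  have he : (fun x => (ch A x - ch A (rf c x)) * Real.sin (x.1 - c)) =
      fun x : Xm m => ch A x * Real.sin (x.1 - c) + ch A (rf c x) * Real.sin ((rf c x).1 - c) := by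
    ext x; rw [sin_rf]; ring
  rw [he]
  refine ⟨hi.add h1, ?_⟩
  rw [integral_add hi h1, h2]; unfold Bm; ring

lemma Dm_nonneg {m : ℕ} {A : Set (Xm m)} {c : ℝ}
    (h : ∀ x : Xm m, 0 < Real.sin (x.1 - c) → rf c x ∈ A → x ∈ A) (x : Xm m) :
    0 ≤ (ch A x - ch A (rf c x)) * Real.sin (x.1 - c) := by
  rcases lt_trichotomy 0 (Real.sin (x.1 - c)) with h0 | h0 | h0
  · refine mul_nonneg ?_ h0.le
    by_cases h1 : rf c x ∈ A
    · rw [ch_of h1, ch_of (h x h0 h1)]; simp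
    · rw [ch_not h1]; simpa using ch_nonneg A x
  · rw [← h0]; simp
  · refine mul_nonneg_of_nonpos_of_nonpos ?_ h0.le
    have h2 : 0 < Real.sin ((rf c x).1 - c) := by rw [sin_rf]; linarith
    by_cases h1 : x ∈ A
    · rw [ch_of h1, ch_of (h (rf c x) h2 (by rw [rf_rf]; exact h1))]; simp
    · rw [ch_not h1]; simpa using ch_nonneg A _

lemma Dm_nonpos {m : ℕ} {A : Set (Xm m)} {c : ℝ}
    (h : ∀ x : Xm m, 0 < Real.sin (x.1 - c) → x ∈ A → rf c x ∈ A) (x : Xm m) :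
    (ch A x - ch A (rf c x)) * Real.sin (x.1 - c) ≤ 0 := by
  rcases lt_trichotomy 0 (Real.sin (x.1 - c)) with h0 | h0 | h0
  · refine mul_nonpos_of_nonpos_of_nonneg ?_ h0.le
    by_cases h1 : x ∈ A
    · rw [ch_of h1, ch_of (h x h0 h1)]; simp
    · rw [ch_not h1]; simpa using ch_nonneg A _
  · rw [← h0]; simp
  · refine mul_nonpos_of_nonneg_of_nonpos ?_ h0.le
    have h2 : 0 < Real.sin ((rf c x).1 - c) := by rw [sin_rf]; linarith
    by_cases h1 : rf c x ∈ A
    · have := h (rf c x) h2 h1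
      rw [rf_rf] at this
      rw [ch_of h1, ch_of this]; simp
    · rw [ch_not h1]; simpa using ch_nonneg A _

lemma slm_shift {S : Set ℝ} (hS : MeasurableSet S) (hp : ∀ x, x + 2 * π ∈ S ↔ x ∈ S) (a : ℝ) :
    slm {y | y + a ∈ S} = slm S := by
  have h : ∀ T : Set ℝ, MeasurableSet T →
      slm T = ∫⁻ x in Set.Ioo (-π) π, T.indicator (1 : ℝ → ℝ≥0∞) x := by
    intro T hT
    rw [lintegral_indicator_one hT, Measure.restrict_apply hT, Set.inter_comm]; rfl
  rw [h S hS, h {y | y + a ∈ S} ((measurable_id.add_const a) hS),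
    ← lint_per_shift (g := S.indicator (1 : ℝ → ℝ≥0∞)) _ a]
  · rfl
  · intro x
    by_cases hx : x ∈ S
    · simp [hx, (hp x).2 hx]
    · have h5 : x + 2 * π ∉ S := fun h2 => hx ((hp x).1 h2)
      simp [hx, h5]

/-- a set decreasing around `a` is a translate of its rearrangement -/
lemma translate_of_dec {m : ℕ} {A : Set (Xm m)} (hA : IsOpen A) (hp : Per (fun x => x ∈ A)) (a : ℝ)
    (h : ∀ (x' : Em m) α β, Real.cos (β - a) < Real.cos (α - a) → (β, x') ∈ A → (α, x') ∈ A)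
    {x : Xm m} (hx : Real.cos (x.1 - a) ≠ -1) :
    x ∈ A ↔ (x.1 - a, x.2) ∈ perRearrSet m A := by
  rw [mem_perRearrSet]
  simp only
  have hop : IsOpen {y : ℝ | (y, x.2) ∈ A} := hA.preimage (by fun_prop)
  have hop2 : IsOpen {y : ℝ | (y + a, x.2) ∈ A} := hA.preimage (by fun_prop)
  have h1 := symmdec_iff (S := {y : ℝ | (y + a, x.2) ∈ A}) hop2 (fun α β hab hb => by
    refine h x.2 (α + a) (β + a) ?_ hb
    simpa using hab) (fo_mem_Ioo hx)
  have h2 := slm_shift (S := {y : ℝ | (y, x.2) ∈ A}) hop.measurableSet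
    (fun y => by have := hp (y, x.2); simp only [eq_iff_iff] at this; exact this) a
  have h3 : slm {y : ℝ | (y + a, x.2) ∈ A} = slm {y : ℝ | (y, x.2) ∈ A} := h2
  rw [← h3, ← h1]
  have h4 := per_fo (g := fun y => (y + a, x.2) ∈ A) (fun y => by
    have := hp (y + a, x.2)
    simp only at this ⊢
    rw [← this]; congr 2; ring) (x.1 - a)
  simp only [eq_iff_iff, sub_add_cancel] at h4
  exact h4.symm

lemma dec_of_plus {m : ℕ} {A : Set (Xm m)} (hp : Per (fun x => x ∈ A)) (a : ℝ)
    (h : ∀ c, 0 < Real.sin (a - c) → ∀ x : Xm m, 0 < Real.sin (x.1 - c) → rf c x ∈ A → x ∈ A)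
    (x' : Em m) (α β : ℝ) (hab : Real.cos (β - a) < Real.cos (α - a)) (hb : (β, x') ∈ A) :
    (α, x') ∈ A := by
  have key : 0 < Real.sin (a - (α + β) / 2) * Real.sin (α - (α + β) / 2) := by
    have := Real.cos_sub_cos (α - a) (β - a)
    rw [show (α - a + (β - a)) / 2 = -(a - (α + β) / 2) by ring,
      show (α - a - (β - a)) / 2 = α - (α + β) / 2 by ring, Real.sin_neg] at this
    nlinarith
  rcases pos_and_pos_or_neg_and_neg_of_mul_pos key with ⟨h1, h2⟩ | ⟨h1, h2⟩
  · refine h ((α + β) / 2) h1 (α, x') h2 ?_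
    have : rf ((α + β) / 2) ((α, x') : Xm m) = (β, x') := by simp [rf]; ring
    rw [this]; exact hb
  · refine h ((α + β) / 2 + π) ?_ (α, x') ?_ ?_
    · rw [← sub_sub, Real.sin_sub_pi]; linarith
    · simp only
      rw [← sub_sub, Real.sin_sub_pi]; linarith
    · have : rf ((α + β) / 2 + π) ((α, x') : Xm m) = (β + 2 * π, x') := by
        simp [rf]; ring
      rw [this]
      have := hp (β, x')
      simp only [eq_iff_iff] at this
      exact this.2 hb

lemma ae_of_ae_SM {m : ℕ} {P : Xm m → Prop} (hm : MeasurableSet {x | P x}) (hp : Per P)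
    (h : ∀ᵐ x ∂(SM m), P x) : ∀ᵐ x, P x := by
  set U : Set (Xm m) := {x | ¬ P x} with hU
  have hUo : MeasurableSet U := hm.compl
  rw [ae_iff]
  change volume U = 0
  rw [← lintegral_indicator_one hUo,
    lint_fold_X (measurable_one.indicator hUo)]
  have : (fun x : Xm m => ∑' n : ℤ, U.indicator (1 : Xm m → ℝ≥0∞) (x.1 - 2 * π * n, x.2))
      =ᵐ[SM m] fun _ => 0 := by
    filter_upwards [h] with x hx
    refine ENNReal.tsum_eq_zero.2 fun n => ?_
    have h2 := hp.shift_int (-n) x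
    rw [show x.1 + 2 * π * ((-n : ℤ) : ℝ) = x.1 - 2 * π * n by push_cast; ring] at h2
    have : (x.1 - 2 * π * (n : ℝ), x.2) ∉ U := by
      simp only [hU, Set.mem_setOf_eq, not_not]; rw [h2]; exact hx
    simp [this]
  rw [lintegral_congr_ae this]; simp

/-- degenerate case -/
lemma deg_case {m : ℕ} {A : Set (Xm m)} (hA : IsOpen A) (hp : Per (fun x => x ∈ A))
    (h : ∀ c, ∀ᵐ x ∂(SM m), x ∈ A ↔ rf c x ∈ A) :
    ∀ᵐ x : Xm m, x ∈ A ↔ (x.1 - 0, x.2) ∈ perRearrSet m A := by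
  have hm : MeasurableSet {q : ℝ × Xm m | q.2 ∈ A ↔ rf q.1 q.2 ∈ A} := by
    have h1 : MeasurableSet {q : ℝ × Xm m | q.2 ∈ A} := measurable_snd hA.measurableSet
    have h2 : MeasurableSet {q : ℝ × Xm m | rf q.1 q.2 ∈ A} := by
      refine measurableSet_preimage (f := fun q : ℝ × Xm m => rf q.1 q.2) ?_ hA.measurableSet
      unfold rf; fun_prop
    exact h1.iff h2
  have hv : ∀ c, ∀ᵐ x : Xm m, x ∈ A ↔ rf c x ∈ A := by
    intro c
    refine ae_of_ae_SM ?_ ?_ (h c)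
    · exact measurableSet_preimage (f := fun x : Xm m => (c, x)) (by fun_prop) hm
    · intro x
      have h1 := hp x
      have h2 := hp.rf c x
      simp only at h1 h2 ⊢
      rw [h1, h2]
  have h2 : ∀ᵐ q ∂((volume : Measure ℝ).prod (volume : Measure (Xm m))),
      q.2 ∈ A ↔ rf q.1 q.2 ∈ A :=
    (Measure.ae_prod_iff_ae_ae hm).2 (ae_of_all _ hv)
  have h3 := Measure.ae_ae_of_ae_prod ((Measure.measurePreserving_swap
    (μ := (volume : Measure (Xm m))) (ν := (volume : Measure ℝ))).quasiMeasurePreserving.ae h2)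
  filter_upwards [h3, vae_sin m 0] with x hx hsin
  rw [sub_zero] at hsin
  have hfo := fo_mem_Ioo (cos_ne_neg_of_sin hsin)
  rw [mem_perRearrSet]
  simp only [sub_zero]
  simp only [Prod.swap, rf] at hx
  have hq : ∀ᵐ y : ℝ, (x ∈ A ↔ (y, x.2) ∈ A) := by
    have hmp : Measure.QuasiMeasurePreserving (fun y : ℝ => (1/2 : ℝ) * (y + x.1)) volume volume := by
      refine (Measure.QuasiMeasurePreserving.comp (g := fun y : ℝ => (1/2:ℝ) * y) ?_
        (measurePreserving_add_right volume x.1).quasiMeasurePreserving)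
      exact ⟨by fun_prop, by
        rw [Real.map_volume_mul_left (by norm_num : (1/2:ℝ) ≠ 0)]
        exact Measure.smul_absolutelyContinuous⟩
    filter_upwards [hmp.ae hx] with y hy
    rw [hy]
    rw [show 2 * (1 / 2 * (y + x.1)) - x.1 = y by ring]
  by_cases hxA : x ∈ A
  · simp only [hxA, true_iff]
    have : slm {y | (y, x.2) ∈ A} = volume (Set.Ioo (-π) π) := by
      refine measure_congr ?_
      filter_upwards [hq] with y hy
      have h5 : (y, x.2) ∈ A := hy.1 hxA
      refine propext ⟨fun h6 => h6.1, fun h6 => ⟨h6, h5⟩⟩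
    rw [this, Real.volume_Ioo, ENNReal.toReal_ofReal (by linarith [Real.pi_pos])]
    have := abs_lt.2 hfo
    linarith
  · simp only [hxA, false_iff, not_lt]
    have : slm {y | (y, x.2) ∈ A} = 0 := by
      have h0 : slm {y | (y, x.2) ∈ A} = volume (∅ : Set ℝ) := by
        refine measure_congr ?_
        filter_upwards [hq] with y hy
        refine propext ⟨fun h6 => (hxA (hy.2 h6.2)).elim, fun h6 => h6.elim⟩
      rw [h0]; simp
    rw [this]; simp

lemma exists_translate {m : ℕ} {A : Set (Xm m)} (hA : IsOpen A) (hp : Per (fun x => x ∈ A))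
    (hT : ∀ c, ∀ x y : Xm m, 0 < Real.sin (x.1 - c) → 0 < Real.sin (y.1 - c) →
      ¬ (x ∉ A ∧ rf c x ∈ A ∧ rf c y ∉ A ∧ y ∈ A)) :
    ∃ a : ℝ, ∀ᵐ x : Xm m, x ∈ A ↔ (x.1 - a, x.2) ∈ perRearrSet m A := by
  have hdich : ∀ c, (∀ x : Xm m, 0 < Real.sin (x.1 - c) → rf c x ∈ A → x ∈ A) ∨
      (∀ x : Xm m, 0 < Real.sin (x.1 - c) → x ∈ A → rf c x ∈ A) := by
    intro c
    by_contra hcon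
    push Not at hcon
    obtain ⟨⟨x, x1, x2, x3⟩, ⟨y, y1, y2, y3⟩⟩ := hcon
    exact hT c x y x1 y1 ⟨x3, x2, y3, y2⟩
  set X := ∫ x, ch A x * Real.cos x.1 ∂(MM m) with hX
  set Y := ∫ x, ch A x * Real.sin x.1 ∂(MM m) with hY
  have hB : ∀ c, Bm A c = Real.cos c * Y - Real.sin c * X := Bm_eq hA.measurableSet
  by_cases hz : (⟨X, Y⟩ : ℂ) = 0
  · refine ⟨0, deg_case hA hp fun c => ?_⟩
    have hX0 : X = 0 := congrArg Complex.re hz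
    have hY0 : Y = 0 := congrArg Complex.im hz
    obtain ⟨hi, he⟩ := Dm_int hA.measurableSet hp c
    rw [hB, hX0, hY0] at he
    simp only [mul_zero, sub_zero] at he
    have h0 : ∀ᵐ x ∂(MM m), (ch A x - ch A (rf c x)) * Real.sin (x.1 - c) = 0 := by
      rcases hdich c with h | h
      · exact (integral_eq_zero_iff_of_nonneg (Dm_nonneg h) hi).1 he
      · have := (integral_eq_zero_iff_of_nonneg (μ := MM m)
          (f := fun x => -((ch A x - ch A (rf c x)) * Real.sin (x.1 - c)))
          (fun x => neg_nonneg.2 (Dm_nonpos h x)) hi.neg).1 (by rw [integral_neg, he, neg_zero])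
        filter_upwards [this] with x hx
        simpa using hx
    filter_upwards [(SM_ac m).ae_le h0, ae_sin m c] with x hx hs
    have h1 : ch A x = ch A (rf c x) := by
      rcases mul_eq_zero.1 hx with h | h
      · linarith
      · exact (hs h).elim
    by_cases h2 : x ∈ A <;> by_cases h3 : rf c x ∈ A
    · simp [h2, h3]
    · rw [ch_of h2, ch_not h3] at h1; norm_num at h1
    · rw [ch_of h3, ch_not h2] at h1; norm_num at h1
    · simp [h2, h3]
  · set z : ℂ := ⟨X, Y⟩ with hzd
    have hR : 0 < ‖z‖ := norm_pos_iff.2 hz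
    have hXz : X = ‖z‖ * Real.cos z.arg := by rw [Complex.norm_mul_cos_arg]
    have hYz : Y = ‖z‖ * Real.sin z.arg := by rw [Complex.norm_mul_sin_arg]
    refine ⟨z.arg, ?_⟩
    have hplus : ∀ c, 0 < Real.sin (z.arg - c) →
        ∀ x : Xm m, 0 < Real.sin (x.1 - c) → rf c x ∈ A → x ∈ A := by
      intro c hc
      rcases hdich c with h | h
      · exact h
      · exfalso
        obtain ⟨hi, he⟩ := Dm_int hA.measurableSet hp c
        have h1 := integral_nonpos (μ := MM m) (fun x => Dm_nonpos h x)
        rw [he, hB] at h1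
        have h2 : Real.cos c * Y - Real.sin c * X = ‖z‖ * Real.sin (z.arg - c) := by
          rw [Real.sin_sub]
          nth_rewrite 1 [hXz]
          nth_rewrite 1 [hYz]
          ring
        rw [h2] at h1
        have := mul_pos hR hc
        linarith
    filter_upwards [vae_sin m z.arg] with x hx
    exact translate_of_dec hA hp z.arg (dec_of_plus hp z.arg hplus) (cos_ne_neg_of_sin hx)

end Stmt9

namespace Stmt9
open Filter Topology

/-! ### Part 11: the converse -/

lemma gagP_sh {m : ℕ} {s : ℝ} (hs : 0 < s) {f : Xm m → ℝ} (hf : Measurable f) (hp : Per f) (a : ℝ) :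
    gagP m s 1 (fun x => f (x.1 + a, x.2)) = gagP m s 1 f := by
  have hf2 : Measurable fun x : Xm m => f (x.1 + a, x.2) := hf.comp (by fun_prop)
  have hp2 : Per fun x : Xm m => f (x.1 + a, x.2) := by
    intro x
    have := hp (x.1 + a, x.2)
    simp only at this ⊢
    rw [← this]; congr 2; ring
  rw [gagP_fold m s hs f hf hp, gagP_fold m s hs _ hf2 hp2]
  set β := (m : ℝ) + 1 + s
  have hH := meas_F β hf
  rw [lintegral_prod _ (meas_F β hf2).aemeasurable, lintegral_prod _ hH.aemeasurable]
  have h1 := lint_sh (G := fun x => ∫⁻ y, ENNReal.ofReal |f x - f y| * gK β x y ∂(SM m))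
    hH.lintegral_prod_right' (fun x => by simp only [gK_shift_left, hp x]) a
  rw [← h1]
  refine lintegral_congr fun x => ?_
  have h2 := lint_sh (G := fun y => ENNReal.ofReal |f (x.1 + a, x.2) - f y| *
      gK β ((x.1 + a, x.2) : Xm m) y) (hH.comp measurable_prodMk_left)
      (fun y => by simp only [gK_shift_right, hp y]) a
  rw [← h2]
  refine lintegral_congr fun y => ?_
  have : gK β ((x.1 + a, x.2) : Xm m) ((y.1 + a, y.2) : Xm m) = gK β x y := by
    simp only [gK]; congr 1; ring
  rw [this]

lemma layer (a b : ℝ) : ENNReal.ofReal |a - b| =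
    ∫⁻ τ : ℝ, (Set.Ico (min a b) (max a b)).indicator 1 τ := by
  rw [lintegral_indicator_one measurableSet_Ico, Real.volume_Ico, max_sub_min_eq_abs, abs_sub_comm]

lemma ch_diff {m : ℕ} (v : Xm m → ℝ) (τ : ℝ) (x y : Xm m) :
    ENNReal.ofReal |ch {z | τ < v z} x - ch {z | τ < v z} y| =
      (Set.Ico (min (v x) (v y)) (max (v x) (v y))).indicator 1 τ := by
  by_cases h1 : τ < v x <;> by_cases h2 : τ < v y
  · rw [ch_of (A := {z | τ < v z}) h1, ch_of (A := {z | τ < v z}) h2, Set.indicator_of_notMem]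
    · simp
    · simp [h1, h2]
  · rw [ch_of (A := {z | τ < v z}) h1, ch_not (A := {z | τ < v z}) h2, Set.indicator_of_mem]
    · simp
    · simp [h1]; right; linarith
  · rw [ch_not (A := {z | τ < v z}) h1, ch_of (A := {z | τ < v z}) h2, Set.indicator_of_mem]
    · simp
    · simp [h2]; left; linarith
  · rw [ch_not (A := {z | τ < v z}) h1, ch_not (A := {z | τ < v z}) h2, Set.indicator_of_notMem]
    · simp
    · simp only [Set.mem_Ico, not_and, not_lt, max_le_iff]
      intro _
      exact ⟨not_lt.1 h1, not_lt.1 h2⟩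

lemma gagP_layer {m : ℕ} {s : ℝ} (hs : 0 < s) {v : Xm m → ℝ} (hv : Continuous v) (hp : Per v) :
    gagP m s 1 v = ∫⁻ τ : ℝ, gagP m s 1 (ch {z | τ < v z}) := by
  have hA : ∀ τ, MeasurableSet {z | τ < v z} := fun τ =>
    (isOpen_lt continuous_const hv).measurableSet
  have hpA : ∀ τ, Per (fun x => x ∈ {z | τ < v z}) := by
    intro τ x
    simp only [Set.mem_setOf_eq]
    rw [hp x]
  simp_rw [fun τ => gagP_fold m s hs _ (measurable_ch (hA τ)) (per_ch (hpA τ))]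
  rw [gagP_fold m s hs v hv.measurable hp]
  set β := (m : ℝ) + 1 + s
  have hcm : Measurable fun q : ℝ × Xm m => ch {z | q.1 < v z} q.2 := by
    have : (fun q : ℝ × Xm m => ch {z | q.1 < v z} q.2) =
        Set.indicator {q : ℝ × Xm m | q.1 < v q.2} (fun _ => (1 : ℝ)) := by
      ext q
      by_cases h : q.1 < v q.2
      · rw [ch_of (A := {z | q.1 < v z}) h, Set.indicator_of_mem (by exact h)]
      · rw [ch_not (A := {z | q.1 < v z}) h, Set.indicator_of_notMem (by exact h)]
    rw [this]
    refine measurable_const.indicator ?_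
    exact (isOpen_lt continuous_fst (hv.comp continuous_snd)).measurableSet
  have hm : Measurable fun r : ℝ × (Xm m × Xm m) =>
      ENNReal.ofReal |ch {z | r.1 < v z} r.2.1 - ch {z | r.1 < v z} r.2.2| * gK β r.2.1 r.2.2 := by
    have h1 : Measurable fun r : ℝ × (Xm m × Xm m) => ch {z | r.1 < v z} r.2.1 :=
      hcm.comp (g := fun q : ℝ × Xm m => ch {z | q.1 < v z} q.2)
        (f := fun r : ℝ × (Xm m × Xm m) => (r.1, r.2.1)) (by fun_prop)
    have h2 : Measurable fun r : ℝ × (Xm m × Xm m) => ch {z | r.1 < v z} r.2.2 :=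
      hcm.comp (g := fun q : ℝ × Xm m => ch {z | q.1 < v z} q.2)
        (f := fun r : ℝ × (Xm m × Xm m) => (r.1, r.2.2)) (by fun_prop)
    have h3 : Measurable fun r : ℝ × (Xm m × Xm m) => gK β r.2.1 r.2.2 :=
      (measurable_gK β).comp measurable_snd
    have h4 := h1.sub h2
    have h5 : Measurable fun r : ℝ × (Xm m × Xm m) =>
      |ch {z | r.1 < v z} r.2.1 - ch {z | r.1 < v z} r.2.2| := measurable_norm.comp h4
    exact h5.ennreal_ofReal.mul h3
  rw [lintegral_lintegral_swap hm.aemeasurable]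
  refine lintegral_congr fun p => ?_
  rw [lintegral_mul_const]
  · rw [layer]
    congr 1
    refine lintegral_congr fun τ => ?_
    rw [ch_diff]
  · simp_rw [ch_diff]
    exact measurable_one.indicator measurableSet_Ico

lemma converse {m : ℕ} {s : ℝ} (hs : 0 < s) {u : Xm m → ℝ} (hu : Continuous u) (hp : Per u)
    (hsign : (∀ x, u x = |u x|) ∨ (∀ x, u x = -|u x|))
    (h : ∀ᵐ τ ∂(volume : Measure ℝ), ∃ a : ℝ, ∀ᵐ x : Xm m,
      x ∈ {x | τ < |u x|} ↔ (x.1 - a, x.2) ∈ perRearrSet m {y | τ < |u y|}) :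
    gagP m s 1 (perRearr1 m u) = gagP m s 1 u := by
  have hv : Continuous fun x => |u x| := hu.abs
  have hgu : gagP m s 1 u = gagP m s 1 (fun x => |u x|) := by
    rw [gagP_unfold m s hs, gagP_unfold m s hs]
    refine lintegral_congr fun x => lintegral_congr fun y => ?_
    have : |u x - u y| = |(|u x|) - (|u y|)| := by
      rcases hsign with h1 | h1
      · rw [← h1 x, ← h1 y]
      · have h2 : u x - u y = -((|u x|) - (|u y|)) := by linarith [h1 x, h1 y]
        rw [h2, abs_neg]
    rw [this]
  obtain ⟨w, w1, w2, w3, w4, w5, w6⟩ := exists_symmdec hs hv hp.abs (fun x => abs_nonneg _)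
  rw [gagP_congr_ae hs (rearr_ae hu w1 w2 w3 w5 w6), hgu, gagP_layer hs hv hp.abs,
    gagP_layer hs w1 w2]
  refine lintegral_congr_ae ?_
  filter_upwards [h] with τ hτ
  obtain ⟨a, ha⟩ := hτ
  have hop : IsOpen {z | τ < w z} := isOpen_lt continuous_const w1
  have hpw : Per (fun x => x ∈ {z | τ < w z}) := by
    intro x
    simp only [Set.mem_setOf_eq]
    rw [w2 x]
  have hae : ch {z | τ < |u z|} =ᵐ[volume] fun x => ch {z | τ < w z} (x.1 + -a, x.2) := by
    filter_upwards [ha, vae_sin m a] with x hx hsn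
    have h1 := translate_of_dec hop hpw 0 (fun x' α β hab hb => by
      rw [sub_zero, sub_zero] at hab
      exact lt_of_lt_of_le hb (w6 x' α β hab)) (x := (x.1 - a, x.2))
      (by simpa using cos_ne_neg_of_sin hsn)
    have h2 : (x.1 - a, x.2) ∈ perRearrSet m {z | τ < w z} ↔
        (x.1 - a, x.2) ∈ perRearrSet m {y | τ < |u y|} := by
      rw [mem_perRearrSet, mem_perRearrSet]
      have := w5.slm hv w1 x.2 τ
      simp only [Set.mem_setOf_eq]
      rw [this]
    simp only [sub_zero] at h1
    rw [h2, ← hx] at h1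
    rw [← sub_eq_add_neg]
    by_cases h3 : x ∈ {z | τ < |u z|}
    · rw [ch_of h3, ch_of (h1.2 h3)]
    · rw [ch_not h3, ch_not (fun h4 => h3 (h1.1 h4))]
  rw [gagP_congr_ae hs hae, gagP_sh hs (measurable_ch hop.measurableSet) (per_ch hpw)]

end Stmt9

theorem stmt_9 (m : ℕ) (s : ℝ) (hs0 : 0 < s) (hs1 : s < 1)
    (u : ℝ × EuclideanSpace ℝ (Fin m) → ℝ) (hu : Continuous u)
    (huper : ∀ x : ℝ × EuclideanSpace ℝ (Fin m), u (x.1 + 2 * π, x.2) = u x)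
    (hfin : gagP m s 1 u ≠ ⊤) :
    gagSeminorm m s 1 (perRearr1 m u) = gagSeminorm m s 1 u ↔
      (((∀ x, u x = |u x|) ∨ (∀ x, u x = -|u x|)) ∧
        ∀ᵐ τ ∂(volume : Measure ℝ), ∃ a : ℝ,
          ({x | τ < |u x|} : Set (ℝ × EuclideanSpace ℝ (Fin m))) =ᵐ[volume]
            {x | (x.1 - a, x.2) ∈ perRearrSet m {y | τ < |u y|}}) := by
  have hG : ∀ f : ℝ × EuclideanSpace ℝ (Fin m) → ℝ, gagSeminorm m s 1 f = gagP m s 1 f := by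
    intro f; simp [gagSeminorm]
  have hP : Stmt9.Per u := huper
  rw [hG, hG]
  constructor
  · intro heq
    refine ⟨Stmt9.sign_of_eq hs0 hu hP hfin (heq ▸ Stmt9.pol_le_abs hs0 hu hP), ?_⟩
    refine ae_of_all _ fun τ => ?_
    obtain ⟨a, ha⟩ := Stmt9.exists_translate (A := {x | τ < |u x|})
      (isOpen_lt continuous_const hu.abs)
      (fun x => by
        change (τ < |u (x.1 + 2 * π, x.2)|) = (τ < |u x|)
        rw [huper x])
      (fun c x y hx hy hcon => by
        refine Stmt9.type_cond hs0 hu hP hfin heq c τ x y hx hy ?_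
        exact ⟨not_lt.1 hcon.1, hcon.2.1, not_lt.1 hcon.2.2.1, hcon.2.2.2⟩)
    refine ⟨a, ?_⟩
    filter_upwards [ha] with x hx
    exact propext hx
  · rintro ⟨hsign, hτ⟩
    refine Stmt9.converse hs0 hu hP hsign ?_
    filter_upwards [hτ] with τ h
    obtain ⟨a, ha⟩ := h
    refine ⟨a, ?_⟩
    filter_upwards [ha] with x hx
    exact iff_of_eq hx
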